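/- arXiv:0804.3032 — 3 statements merged into one kernel-verified Lean document; each statement's English description precedes it below -/
import Mathlib

section
/- Let β > 0, let s ≥ 1 be an integer, let (Ω, F, P) be a probability space with a filtration (F_t)_{t≥s}, and let (a_t)_{t≥s} and (b_t)_{t≥s} be adapted real-valued stochastic processes with a_s = b_s = 1 almost surely and 1 ≤ a_t ≤ t and 1 ≤ b_t ≤ t almost surely for all t ≥ s, such that for every integer t ≥ s, almost surely E[a_{t+1} | F_t] = a_t·(1 + 1/((2+β)t − 2)), E[b_{t+1} | F_t] = b_t·(1 + 1/((2+β)t − 2)), and E[a_{t+1}·b_{t+1} | F_t] = a_t·b_t·(1 + 2/((2+β)t − 2)). Then for every integer t ≥ s: E[a_t·b_t] ≤ E[a_t]·E[b_t], and E[a_t] = Γ(t − 1/(2+β))·Γ(s − 2/(2+β)) / (Γ(t − 2/(2+β))·Γ(s − 1/(2+β))). Moreover there exists a constant C > 0 depending only on β such that E[a_t] ≤ (t/s)^{1/(2+β)}·(1 + C/s) for all integers t ≥ s ≥ 1. -/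
open MeasureTheory

/-!
Taking expectations in the recurrences turns each of `E[a_t]`, `E[b_t]`, `E[a_t b_t]` into a product
over `s ≤ i < t` of the factors `1 + r_i` or `1 + 2 r_i`, where `r_i = 1 / ((2 + β) i - 2)`, and
`1 + 2 r_i ≤ (1 + r_i)²`. With `θ = 1 / (2 + β)` one has `1 + r_i = (i - θ) / (i - 2θ)`, so the
product telescopes into a quotient of Gamma values. Wendel's inequalities, which come from the
log-convexity of `Γ`, bound `Γ(t - θ) / Γ(t - 2θ)` by `t ^ θ` and `Γ(s - 2θ) / Γ(s - θ)` by
`s ^ (1 - θ) / (s - 2θ)`.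
-/

section CondExp

variable {Ω : Type*} {m0 : MeasurableSpace Ω} {P : Measure Ω} {ℱ : ℕ → MeasurableSpace Ω}
  {X : ℕ → Ω → ℝ} {r : ℕ → ℝ} {s t : ℕ}

theorem integral_eq_integral_mul_prod_of_condExp (hℱ : ∀ t, ℱ t ≤ m0)
    [∀ t, SigmaFinite (P.trim (hℱ t))]
    (hX : ∀ t, s ≤ t → P[X (t + 1) | ℱ t] =ᵐ[P] fun ω => X t ω * r t) (hst : s ≤ t) :
    ∫ ω, X t ω ∂P = (∫ ω, X s ω ∂P) * ∏ i ∈ Finset.Ico s t, r i := by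
  induction t, hst using Nat.le_induction with
  | base => simp
  | succ t hst ih =>
    calc ∫ ω, X (t + 1) ω ∂P
      _ = ∫ ω, (P[X (t + 1) | ℱ t]) ω ∂P := (integral_condExp (hℱ t)).symm
      _ = (∫ ω, X t ω ∂P) * r t := by rw [integral_congr_ae (hX t hst), integral_mul_const]
      _ = _ := by rw [ih, Finset.prod_Ico_succ_top hst, mul_assoc]

theorem integral_eq_prod_of_condExp [IsProbabilityMeasure P] (hℱ : ∀ t, ℱ t ≤ m0)
    (hXs : ∀ᵐ ω ∂P, X s ω = 1)
    (hX : ∀ t, s ≤ t → P[X (t + 1) | ℱ t] =ᵐ[P] fun ω => X t ω * r t) (hst : s ≤ t) :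
    ∫ ω, X t ω ∂P = ∏ i ∈ Finset.Ico s t, r i := by
  have (t : ℕ) : SigmaFinite (P.trim (hℱ t)) := inferInstance
  rw [integral_eq_integral_mul_prod_of_condExp hℱ hX hst, integral_congr_ae hXs,
    integral_const, probReal_univ, one_smul, one_mul]

end CondExp

theorem prod_one_add_add_le_prod_mul_prod {ι R : Type*} [CommSemiring R] [PartialOrder R]
    [IsOrderedRing R] {s : Finset ι} {p q : ι → R} (hp : ∀ i ∈ s, 0 ≤ p i)
    (hq : ∀ i ∈ s, 0 ≤ q i) :
    ∏ i ∈ s, (1 + (p i + q i)) ≤ (∏ i ∈ s, (1 + p i)) * ∏ i ∈ s, (1 + q i) := by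
  rw [← Finset.prod_mul_distrib]
  refine Finset.prod_le_prod
    (fun i hi => add_nonneg zero_le_one (add_nonneg (hp i hi) (hq i hi))) fun i hi => ?_
  calc 1 + (p i + q i)
    _ ≤ 1 + (p i + q i) + p i * q i := le_add_of_nonneg_right (mul_nonneg (hp i hi) (hq i hi))
    _ = (1 + p i) * (1 + q i) := by ring

theorem prod_Ico_natCast_sub_eq_Gamma_div {c : ℝ} {s t : ℕ} (hc : c < s) (hst : s ≤ t) :
    ∏ i ∈ Finset.Ico s t, ((i : ℝ) - c) = Real.Gamma (t - c) / Real.Gamma (s - c) := by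
  induction t, hst using Nat.le_induction with
  | base => rw [Finset.Ico_self, Finset.prod_empty,
      div_self (Real.Gamma_pos_of_pos (sub_pos.2 hc)).ne']
  | succ t hst ih =>
    have hct : (t : ℝ) - c ≠ 0 := (sub_pos.2 (hc.trans_le (by exact_mod_cast hst))).ne'
    rw [Finset.prod_Ico_succ_top hst, ih, Nat.cast_succ, add_sub_right_comm,
      Real.Gamma_add_one hct, mul_comm, mul_div_assoc]

theorem Gamma_add_le_rpow_mul_Gamma {x θ : ℝ} (hx : 0 < x) (hθ₀ : 0 ≤ θ) (hθ₁ : θ ≤ 1) :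
    Real.Gamma (x + θ) ≤ x ^ θ * Real.Gamma x := by
  rcases hθ₀.eq_or_lt with rfl | hθ₀
  · simp
  rcases hθ₁.eq_or_lt with rfl | hθ₁
  · rw [Real.rpow_one, Real.Gamma_add_one hx.ne']
  have hΓ : 0 < Real.Gamma x := Real.Gamma_pos_of_pos hx
  calc Real.Gamma (x + θ)
    _ = Real.Gamma ((1 - θ) * x + θ * (x + 1)) := by ring_nf
    _ ≤ Real.Gamma x ^ (1 - θ) * Real.Gamma (x + 1) ^ θ :=
      Real.Gamma_mul_add_mul_le_rpow_Gamma_mul_rpow_Gamma hx (by positivity) (sub_pos.2 hθ₁) hθ₀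
        (sub_add_cancel 1 θ)
    _ = x ^ θ * (Real.Gamma x ^ (1 - θ) * Real.Gamma x ^ θ) := by
      rw [Real.Gamma_add_one hx.ne', Real.mul_rpow hx.le hΓ.le, mul_left_comm]
    _ = x ^ θ * Real.Gamma x := by
      rw [← Real.rpow_add hΓ, sub_add_cancel, Real.rpow_one]

theorem mul_Gamma_le_rpow_mul_Gamma_add {x θ : ℝ} (hx : 0 < x) (hθ₀ : 0 ≤ θ) (hθ₁ : θ ≤ 1) :
    x * Real.Gamma x ≤ (x + θ) ^ (1 - θ) * Real.Gamma (x + θ) := by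
  have h := Gamma_add_le_rpow_mul_Gamma (add_pos_of_pos_of_nonneg hx hθ₀) (sub_nonneg.2 hθ₁)
    (sub_le_self 1 hθ₀)
  rwa [add_assoc, add_sub_cancel, Real.Gamma_add_one hx.ne'] at h

theorem Gamma_add_mul_Gamma_div_le {x y θ : ℝ} (hx : 0 < x) (hy : 0 < y) (hθ₀ : 0 ≤ θ)
    (hθ₁ : θ ≤ 1) :
    Real.Gamma (y + θ) * Real.Gamma x / (Real.Gamma y * Real.Gamma (x + θ)) ≤
      y ^ θ * ((x + θ) ^ (1 - θ) / x) := by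
  have hΓy : 0 < Real.Gamma y := Real.Gamma_pos_of_pos hy
  have hΓxθ : 0 < Real.Gamma (x + θ) := Real.Gamma_pos_of_pos (by positivity)
  have hleft : Real.Gamma (y + θ) / Real.Gamma y ≤ y ^ θ :=
    (div_le_iff₀ hΓy).2 (Gamma_add_le_rpow_mul_Gamma hy hθ₀ hθ₁)
  have hright : Real.Gamma x / Real.Gamma (x + θ) ≤ (x + θ) ^ (1 - θ) / x := by
    rw [div_le_div_iff₀ hΓxθ hx, mul_comm]
    exact mul_Gamma_le_rpow_mul_Gamma_add hx hθ₀ hθ₁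
  rw [mul_div_mul_comm]
  exact mul_le_mul hleft hright (div_pos (Real.Gamma_pos_of_pos hx) hΓxθ).le (by positivity)

theorem Gamma_sub_mul_Gamma_sub_two_mul_div_le {θ s t : ℝ} (hθ₀ : 0 ≤ θ) (hθ₁ : θ ≤ 1)
    (hs : 2 * θ < s) (ht : 2 * θ < t) :
    Real.Gamma (t - θ) * Real.Gamma (s - 2 * θ) / (Real.Gamma (t - 2 * θ) * Real.Gamma (s - θ)) ≤
      (t / s) ^ θ * (s / (s - 2 * θ)) := by
  have hs₀ : 0 < s := by linarith
  have ht₀ : 0 < t := by linarith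
  have hsθ : 0 < s - 2 * θ := sub_pos.2 hs
  calc _ ≤ (t - 2 * θ) ^ θ * ((s - θ) ^ (1 - θ) / (s - 2 * θ)) := by
        have h := Gamma_add_mul_Gamma_div_le hsθ (sub_pos.2 ht) hθ₀ hθ₁
        rwa [show t - 2 * θ + θ = t - θ by ring, show s - 2 * θ + θ = s - θ by ring] at h
    _ ≤ t ^ θ * (s ^ (1 - θ) / (s - 2 * θ)) := by
        have hsθ' : 0 ≤ s - θ := by linarith
        gcongr <;> linarith
    _ = (t / s) ^ θ * (s / (s - 2 * θ)) := by
        rw [Real.rpow_sub hs₀, Real.rpow_one, Real.div_rpow ht₀.le hs₀.le]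
        ring

theorem prod_Ico_one_add_one_div_eq_Gamma {β : ℝ} (hβ : 0 < β) {s t : ℕ} (hs : 1 ≤ s)
    (hst : s ≤ t) :
    ∏ i ∈ Finset.Ico s t, (1 + 1 / ((2 + β) * (i : ℝ) - 2)) =
      Real.Gamma ((t : ℝ) - 1 / (2 + β)) * Real.Gamma ((s : ℝ) - 2 / (2 + β)) /
        (Real.Gamma ((t : ℝ) - 2 / (2 + β)) * Real.Gamma ((s : ℝ) - 1 / (2 + β))) := by
  have hs' : (1 : ℝ) ≤ s := by exact_mod_cast hs
  have two_div_lt : 2 / (2 + β) < s := (div_lt_one (by positivity)).2 (by linarith) |>.trans_le hs'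
  have one_div_lt : 1 / (2 + β) < s := two_div_lt.trans' (by gcongr; norm_num)
  have factor_eq (i : ℕ) (hi : i ∈ Finset.Ico s t) :
      1 + 1 / ((2 + β) * (i : ℝ) - 2) = ((i : ℝ) - 1 / (2 + β)) / ((i : ℝ) - 2 / (2 + β)) := by
    have hi' : (1 : ℝ) ≤ i := by exact_mod_cast hs.trans (Finset.mem_Ico.1 hi).1
    have hden : (2 + β) * (i : ℝ) - 2 ≠ 0 := by nlinarith
    field_simp
    ring
  rw [Finset.prod_congr rfl factor_eq, Finset.prod_div_distrib,
    prod_Ico_natCast_sub_eq_Gamma_div one_div_lt hst,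
    prod_Ico_natCast_sub_eq_Gamma_div two_div_lt hst, div_div_div_eq, mul_comm (Real.Gamma (s - _))]

theorem prod_Ico_one_add_one_div_le_rpow {β : ℝ} (hβ : 0 < β) {s t : ℕ} (hs : 1 ≤ s)
    (hst : s ≤ t) :
    ∏ i ∈ Finset.Ico s t, (1 + 1 / ((2 + β) * (i : ℝ) - 2)) ≤
      ((t : ℝ) / s) ^ (1 / (2 + β)) * (1 + 2 / β / s) := by
  have hs' : (1 : ℝ) ≤ s := by exact_mod_cast hs
  have hst' : (s : ℝ) ≤ t := by exact_mod_cast hst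
  have two_theta : 2 / (2 + β) = 2 * (1 / (2 + β)) := by ring
  have two_theta_lt : 2 * (1 / (2 + β)) < s := by
    rw [← two_theta]
    exact (div_lt_one (by positivity)).2 (by linarith) |>.trans_le hs'
  have correction_le : (s : ℝ) / (s - 2 * (1 / (2 + β))) ≤ 1 + 2 / β / s := by
    rw [div_le_iff₀ (sub_pos.2 two_theta_lt)]
    field_simp
    nlinarith
  rw [prod_Ico_one_add_one_div_eq_Gamma hβ hs hst, two_theta]
  calc _ ≤ ((t : ℝ) / s) ^ (1 / (2 + β)) * (s / (s - 2 * (1 / (2 + β)))) :=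
        Gamma_sub_mul_Gamma_sub_two_mul_div_le (by positivity)
          ((div_le_one (by positivity)).2 (by linarith)) two_theta_lt (two_theta_lt.trans_le hst')
    _ ≤ _ := by gcongr

theorem block_size_covariance_general {β : ℝ} (hβ : 0 < β) {s : ℕ} (hs : 1 ≤ s) {Ω : Type*}
    {m0 : MeasurableSpace Ω} {P : Measure Ω} [IsProbabilityMeasure P]
    {ℱ : ℕ → MeasurableSpace Ω} (hℱ : ∀ t, ℱ t ≤ m0) {a b : ℕ → Ω → ℝ}
    (has : ∀ᵐ ω ∂P, a s ω = 1) (hbs : ∀ᵐ ω ∂P, b s ω = 1)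
    (ha : ∀ t : ℕ, s ≤ t →
      P[a (t + 1) | ℱ t] =ᵐ[P] fun ω => a t ω * (1 + 1 / ((2 + β) * (t : ℝ) - 2)))
    (hb : ∀ t : ℕ, s ≤ t →
      P[b (t + 1) | ℱ t] =ᵐ[P] fun ω => b t ω * (1 + 1 / ((2 + β) * (t : ℝ) - 2)))
    (hab : ∀ t : ℕ, s ≤ t →
      P[fun ω => a (t + 1) ω * b (t + 1) ω | ℱ t] =ᵐ[P]
        fun ω => a t ω * b t ω * (1 + 2 / ((2 + β) * (t : ℝ) - 2)))
    {t : ℕ} (ht : s ≤ t) :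
    (∫ ω, a t ω * b t ω ∂P ≤ (∫ ω, a t ω ∂P) * ∫ ω, b t ω ∂P) ∧
      (∫ ω, a t ω ∂P =
        Real.Gamma ((t : ℝ) - 1 / (2 + β)) * Real.Gamma ((s : ℝ) - 2 / (2 + β)) /
          (Real.Gamma ((t : ℝ) - 2 / (2 + β)) * Real.Gamma ((s : ℝ) - 1 / (2 + β)))) ∧
      ∫ ω, a t ω ∂P ≤ ((t : ℝ) / (s : ℝ)) ^ (1 / (2 + β)) * (1 + 2 / β / (s : ℝ)) := by
  have habs : ∀ᵐ ω ∂P, a s ω * b s ω = 1 := by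
    filter_upwards [has, hbs] with ω h₁ h₂
    rw [h₁, h₂, one_mul]
  have rate_nonneg (i : ℕ) (hi : i ∈ Finset.Ico s t) : 0 ≤ 1 / ((2 + β) * (i : ℝ) - 2) := by
    have hi' : (1 : ℝ) ≤ i := by exact_mod_cast hs.trans (Finset.mem_Ico.1 hi).1
    exact one_div_nonneg.2 (by nlinarith)
  rw [integral_eq_prod_of_condExp hℱ has ha ht, integral_eq_prod_of_condExp hℱ hbs hb ht,
    integral_eq_prod_of_condExp hℱ (X := fun t ω => a t ω * b t ω) habs hab ht]
  refine ⟨?_, prod_Ico_one_add_one_div_eq_Gamma hβ hs ht, prod_Ico_one_add_one_div_le_rpow hβ hs ht⟩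
  simpa only [← add_div, one_add_one_eq_two] using
    prod_one_add_add_le_prod_mul_prod rate_nonneg rate_nonneg

/-- **Lemma 5.1 (abstract form).** Let `β > 0`. For adapted processes `(a_t), (b_t)` with
`a_s = b_s = 1`, `1 ≤ a_t ≤ t`, `1 ≤ b_t ≤ t` a.s., satisfying the stated conditional
expectation recurrences, we have `E[a_t b_t] ≤ E[a_t]E[b_t]`,
`E[a_t] = Γ(t−1/(2+β))Γ(s−2/(2+β))/(Γ(t−2/(2+β))Γ(s−1/(2+β)))`, and moreover there is a
constant `C > 0` depending only on `β` with `E[a_t] ≤ (t/s)^{1/(2+β)}(1+C/s)`. -/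
theorem block_size_covariance (β : ℝ) (hβ : 0 < β) :
    ∃ C : ℝ, 0 < C ∧
      ∀ (s : ℕ), 1 ≤ s →
      ∀ (Ω : Type) (m0 : MeasurableSpace Ω) (P : Measure Ω),
        IsProbabilityMeasure P →
        ∀ (ℱ : Filtration ℕ m0) (a b : ℕ → Ω → ℝ),
        Adapted ℱ a → Adapted ℱ b →
        (∀ᵐ ω ∂P, a s ω = 1) → (∀ᵐ ω ∂P, b s ω = 1) →
        (∀ t : ℕ, s ≤ t → ∀ᵐ ω ∂P,
          1 ≤ a t ω ∧ a t ω ≤ (t : ℝ) ∧ 1 ≤ b t ω ∧ b t ω ≤ (t : ℝ)) →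
        (∀ t : ℕ, s ≤ t →
          P[a (t + 1)|ℱ t] =ᵐ[P] fun ω => a t ω * (1 + 1 / ((2 + β) * (t : ℝ) - 2))) →
        (∀ t : ℕ, s ≤ t →
          P[b (t + 1)|ℱ t] =ᵐ[P] fun ω => b t ω * (1 + 1 / ((2 + β) * (t : ℝ) - 2))) →
        (∀ t : ℕ, s ≤ t →
          P[fun ω => a (t + 1) ω * b (t + 1) ω|ℱ t] =ᵐ[P]
            fun ω => a t ω * b t ω * (1 + 2 / ((2 + β) * (t : ℝ) - 2))) →
        ∀ t : ℕ, s ≤ t →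
          (∫ ω, a t ω * b t ω ∂P ≤ (∫ ω, a t ω ∂P) * ∫ ω, b t ω ∂P) ∧
          (∫ ω, a t ω ∂P =
            Real.Gamma ((t : ℝ) - 1 / (2 + β)) * Real.Gamma ((s : ℝ) - 2 / (2 + β)) /
              (Real.Gamma ((t : ℝ) - 2 / (2 + β)) * Real.Gamma ((s : ℝ) - 1 / (2 + β)))) ∧
          ∫ ω, a t ω ∂P ≤ ((t : ℝ) / (s : ℝ)) ^ (1 / (2 + β)) * (1 + C / (s : ℝ)) :=
  ⟨2 / β, by positivity, fun s hs Ω m0 P _ ℱ a b _ _ has hbs _ ha hb hab t ht =>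
    block_size_covariance_general hβ hs ℱ.le has hbs ha hb hab ht⟩
end

section
/- Let β > 0, let m ≥ 1 be an integer, and let (Y_i)_{i≥1} be nonnegative random variables on a common probability space such that for every integer k ≥ 1 there exists a real M_k with E[∏_{j=1}^{k} (Y_{i_j}/(m·i_j)^{1/(2+β)})²] ≤ M_k for all positive integers i_1, …, i_k. Then for every δ > 0 and every γ > 0 there exists a constant L > 0 (depending on δ, γ, β, m and the M_k but not on n) such that for all integers n ≥ 1, P(Σ_{i=1}^{n} (Y_i/(m·i)^{2/(2+β)})² ≥ n^{β/(2+β)+δ}) ≤ L/n^{γ}. -/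
/-!
Write `Y_i² / (m i)^{4/(2+β)} = w_i X_i` with `X_i = (Y_i / (m i)^{1/(2+β)})²` and
`w_i = (m i)^{-2/(2+β)}`. Expanding the `k`-th power of `∑ w_i X_i` and bounding every mixed moment
by `M_k` gives `E[(∑ w_i X_i)^k] ≤ M_k (∑ w_i)^k`, and `∑_{i ≤ n} w_i` is of order `n^{β/(2+β)}`.
By Markov's inequality for the `k`-th power the probability is then `O(n^{-δk})`, so that any
`k ≥ γ / δ` will do.
-/

open MeasureTheory

section WeightedSum

variable {ι Ω : Type*} [MeasurableSpace Ω] {P : Measure Ω} {X : ι → Ω → ℝ} {w : ι → ℝ}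
  {t : Finset ι} {k : ℕ} {M : ℝ}

/-- The mixed moments of order `k` of the family `X`, with (possibly repeated) indices taken from
`T`, exist and are at most `M`. Integrability is included because the Bochner integral of a
non-integrable function is `0`. -/
def MixedMomentsLE (P : Measure Ω) (X : ι → Ω → ℝ) (T : Set ι) (k : ℕ) (M : ℝ) : Prop :=
  ∀ i : Fin k → ι, (∀ j, i j ∈ T) →
    Integrable (fun ω => ∏ j, X (i j) ω) P ∧ ∫ ω, ∏ j, X (i j) ω ∂P ≤ M

theorem MixedMomentsLE.mono {S T : Set ι} (h : MixedMomentsLE P X T k M) (hST : S ⊆ T) :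
    MixedMomentsLE P X S k M :=
  fun i hi => h i fun j => hST (hi j)

theorem weighted_sum_pow_eq_sum_piFinset (t : Finset ι) (w x : ι → ℝ) (k : ℕ) :
    (∑ i ∈ t, w i * x i) ^ k =
      ∑ p ∈ Fintype.piFinset (fun _ : Fin k => t), (∏ j, w (p j)) * ∏ j, x (p j) := by
  simp_rw [Finset.sum_pow', Finset.prod_mul_distrib]

theorem MixedMomentsLE.integrable_weighted_sum_pow (h : MixedMomentsLE P X t k M) (w : ι → ℝ) :
    Integrable (fun ω => (∑ i ∈ t, w i * X i ω) ^ k) P := by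
  simp_rw [weighted_sum_pow_eq_sum_piFinset]
  exact integrable_finsetSum _ fun p hp => (h p (Fintype.mem_piFinset.1 hp)).1.const_mul _

theorem MixedMomentsLE.integral_weighted_sum_pow_le (h : MixedMomentsLE P X t k M)
    (hw : ∀ i, 0 ≤ w i) :
    ∫ ω, (∑ i ∈ t, w i * X i ω) ^ k ∂P ≤ M * (∑ i ∈ t, w i) ^ k := by
  have hmoment : ∀ p ∈ Fintype.piFinset (fun _ : Fin k => t),
      Integrable (fun ω => ∏ j, X (p j) ω) P ∧ ∫ ω, ∏ j, X (p j) ω ∂P ≤ M :=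
    fun p hp => h p (Fintype.mem_piFinset.1 hp)
  calc ∫ ω, (∑ i ∈ t, w i * X i ω) ^ k ∂P
      = ∑ p ∈ Fintype.piFinset (fun _ : Fin k => t),
          (∏ j, w (p j)) * ∫ ω, ∏ j, X (p j) ω ∂P := by
        simp_rw [weighted_sum_pow_eq_sum_piFinset]
        rw [integral_finsetSum _ fun p hp => (hmoment p hp).1.const_mul _]
        simp_rw [integral_const_mul]
    _ ≤ ∑ p ∈ Fintype.piFinset (fun _ : Fin k => t), (∏ j, w (p j)) * M := by
        gcongr with p hp
        · exact Finset.prod_nonneg fun j _ => hw (p j)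
        · exact (hmoment p hp).2
    _ = M * (∑ i ∈ t, w i) ^ k := by
        rw [← Finset.sum_mul, ← Finset.sum_pow', mul_comm]

theorem MixedMomentsLE.measureReal_weighted_sum_ge_le (h : MixedMomentsLE P X t k M)
    (hX : ∀ i ω, 0 ≤ X i ω) (hw : ∀ i, 0 ≤ w i) {a : ℝ} (ha : 0 < a) :
    P.real {ω | a ≤ ∑ i ∈ t, w i * X i ω} ≤ M * ((∑ i ∈ t, w i) / a) ^ k := by
  have hsum_nonneg : ∀ ω, 0 ≤ ∑ i ∈ t, w i * X i ω := fun ω =>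
    Finset.sum_nonneg fun i _ => mul_nonneg (hw i) (hX i ω)
  have hint := h.integrable_weighted_sum_pow w
  have hsubset : {ω | a ≤ ∑ i ∈ t, w i * X i ω} ⊆ {ω | a ^ k ≤ (∑ i ∈ t, w i * X i ω) ^ k} :=
    fun _ hω => pow_le_pow_left₀ ha.le hω k
  have hmarkov : a ^ k * P.real {ω | a ^ k ≤ (∑ i ∈ t, w i * X i ω) ^ k} ≤
      ∫ ω, (∑ i ∈ t, w i * X i ω) ^ k ∂P :=
    mul_meas_ge_le_integral_of_nonneg (.of_forall fun ω => pow_nonneg (hsum_nonneg ω) k) hint _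
  rw [div_pow, ← mul_div_assoc, le_div_iff₀' (pow_pos ha k)]
  calc a ^ k * P.real {ω | a ≤ ∑ i ∈ t, w i * X i ω}
      ≤ a ^ k * P.real {ω | a ^ k ≤ (∑ i ∈ t, w i * X i ω) ^ k} := by
        gcongr
        exact (hint.measure_ge_lt_top (pow_pos ha k)).ne
    _ ≤ ∫ ω, (∑ i ∈ t, w i * X i ω) ^ k ∂P := hmarkov
    _ ≤ M * (∑ i ∈ t, w i) ^ k := h.integral_weighted_sum_pow_le hw

theorem exists_measureReal_weighted_sum_ge_le_div_rpow {X : ℕ → Ω → ℝ} {w : ℕ → ℝ} {C s δ : ℝ}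
    (hX : ∀ i ω, 0 ≤ X i ω) (hmom : ∀ k, 1 ≤ k → ∃ M, MixedMomentsLE P X (Set.Ici 1) k M)
    (hw : ∀ i, 0 ≤ w i) (hw_sum : ∀ n : ℕ, ∑ i ∈ Finset.Icc 1 n, w i ≤ C * (n : ℝ) ^ s)
    (hδ : 0 < δ) (γ : ℝ) :
    ∃ L : ℝ, 0 < L ∧ ∀ n : ℕ, 1 ≤ n →
      P.real {ω | (n : ℝ) ^ (s + δ) ≤ ∑ i ∈ Finset.Icc 1 n, w i * X i ω} ≤ L / (n : ℝ) ^ γ := by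
  obtain ⟨k, hk⟩ := exists_nat_ge (max 1 (γ / δ))
  have hk_one : 1 ≤ k := by exact_mod_cast (le_max_left _ _).trans hk
  have hγ_le : γ ≤ δ * k := (div_le_iff₀' hδ).1 ((le_max_right _ _).trans hk)
  obtain ⟨M, hM⟩ := hmom k hk_one
  have hC : 0 ≤ C := by simpa using (Finset.sum_nonneg fun i _ => hw i).trans (hw_sum 1)
  refine ⟨|M| * C ^ k + 1, by positivity, fun n hn => ?_⟩
  have hn_one : (1 : ℝ) ≤ n := by exact_mod_cast hn
  have hn_pos : (0 : ℝ) < n := by positivity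
  have hw_sum_nonneg : 0 ≤ ∑ i ∈ Finset.Icc 1 n, w i := Finset.sum_nonneg fun i _ => hw i
  have hM_Icc : MixedMomentsLE P X (Finset.Icc 1 n) k M :=
    hM.mono fun _ hi => (Finset.mem_Icc.1 hi).1
  calc P.real {ω | (n : ℝ) ^ (s + δ) ≤ ∑ i ∈ Finset.Icc 1 n, w i * X i ω}
      ≤ M * ((∑ i ∈ Finset.Icc 1 n, w i) / (n : ℝ) ^ (s + δ)) ^ k :=
        hM_Icc.measureReal_weighted_sum_ge_le hX hw (by positivity)
    _ ≤ |M| * (C * (n : ℝ) ^ s / (n : ℝ) ^ (s + δ)) ^ k := by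
        gcongr
        · exact le_abs_self M
        · exact hw_sum n
    _ = |M| * C ^ k / (n : ℝ) ^ (δ * k) := by
        rw [Real.rpow_add hn_pos, mul_comm C, mul_div_mul_left _ _ (by positivity), div_pow,
          ← Real.rpow_mul_natCast hn_pos.le, mul_div_assoc]
    _ ≤ (|M| * C ^ k + 1) / (n : ℝ) ^ γ := by
        gcongr
        · linarith

end WeightedSum

section PowerSums

variable {s : ℝ}

theorem mul_rpow_sub_one_le_rpow_sub_rpow {x : ℝ} (hx : 1 ≤ x) (hs₀ : 0 ≤ s) (hs₁ : s ≤ 1) :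
    s * x ^ (s - 1) ≤ x ^ s - (x - 1) ^ s := by
  have hx_pos : 0 < x := by linarith
  have hx_inv : x⁻¹ ≤ 1 := inv_le_one_of_one_le₀ hx
  have hbernoulli : (1 + -x⁻¹) ^ s ≤ 1 + s * -x⁻¹ :=
    rpow_one_add_le_one_add_mul_self (by linarith) hs₀ hs₁
  have hfactor : x - 1 = x * (1 + -x⁻¹) := by field_simp; ring
  calc s * x ^ (s - 1) = x ^ s - x ^ s * (1 + s * -x⁻¹) := by
        rw [Real.rpow_sub_one hx_pos.ne']; ring
    _ ≤ x ^ s - x ^ s * (1 + -x⁻¹) ^ s := by gcongr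
    _ = x ^ s - (x - 1) ^ s := by
        rw [hfactor, Real.mul_rpow hx_pos.le (by linarith)]

theorem mul_sum_Icc_rpow_sub_one_le (hs₀ : 0 ≤ s) (hs₁ : s ≤ 1) (n : ℕ) :
    s * ∑ i ∈ Finset.Icc 1 n, (i : ℝ) ^ (s - 1) ≤ (n : ℝ) ^ s := by
  induction n with
  | zero => simpa using Real.rpow_nonneg le_rfl s
  | succ n ih =>
    have hstep : s * ((n + 1 : ℕ) : ℝ) ^ (s - 1) ≤ ((n + 1 : ℕ) : ℝ) ^ s - (n : ℝ) ^ s := by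
      simpa using mul_rpow_sub_one_le_rpow_sub_rpow (x := ((n + 1 : ℕ) : ℝ)) (by simp) hs₀ hs₁
    rw [Finset.sum_Icc_succ_top (by lia), mul_add]
    linarith

theorem sum_Icc_mul_rpow_sub_one_le {m : ℝ} (hm : 0 ≤ m) (hs₀ : 0 < s) (hs₁ : s ≤ 1) (n : ℕ) :
    ∑ i ∈ Finset.Icc 1 n, (m * i) ^ (s - 1) ≤ m ^ (s - 1) / s * (n : ℝ) ^ s := by
  calc ∑ i ∈ Finset.Icc 1 n, (m * i) ^ (s - 1)
      = m ^ (s - 1) / s * (s * ∑ i ∈ Finset.Icc 1 n, (i : ℝ) ^ (s - 1)) := by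
        simp_rw [Real.mul_rpow hm (Nat.cast_nonneg _), ← Finset.mul_sum]
        field_simp
    _ ≤ m ^ (s - 1) / s * (n : ℝ) ^ s := by
        gcongr
        exact mul_sum_Icc_rpow_sub_one_le hs₀.le hs₁ n

end PowerSums

theorem sq_div_rpow_two_mul {x : ℝ} (hx : 0 ≤ x) (y a : ℝ) :
    (y / x ^ (2 * a)) ^ 2 = x ^ (-(2 * a)) * (y / x ^ a) ^ 2 := by
  rw [Real.rpow_neg hx, mul_comm 2 a, Real.rpow_mul hx, Real.rpow_two]
  ring

theorem bad_set_probability_general {β m : ℝ} (hβ : 0 < β) (hm : 0 < m) {Ω : Type*}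
    [MeasurableSpace Ω] {P : Measure Ω} {Y : ℕ → Ω → ℝ}
    (hmom : ∀ k, 1 ≤ k → ∃ M,
      MixedMomentsLE P (fun i ω => (Y i ω / (m * i) ^ (1 / (2 + β))) ^ 2) (Set.Ici 1) k M)
    {δ : ℝ} (hδ : 0 < δ) (γ : ℝ) :
    ∃ L : ℝ, 0 < L ∧ ∀ n : ℕ, 1 ≤ n →
      P.real {ω | (n : ℝ) ^ (β / (2 + β) + δ) ≤
        ∑ i ∈ Finset.Icc 1 n, (Y i ω / (m * i) ^ (2 / (2 + β))) ^ 2} ≤ L / (n : ℝ) ^ γ := by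
  have hs₁ : β / (2 + β) ≤ 1 := (div_le_one (by positivity)).2 (by linarith)
  have hexponent : -(2 * (1 / (2 + β))) = β / (2 + β) - 1 := by field_simp; ring
  have hsplit : ∀ (i : ℕ) (y : ℝ), (y / (m * i) ^ (2 / (2 + β))) ^ 2 =
      (m * i) ^ (β / (2 + β) - 1) * (y / (m * i) ^ (1 / (2 + β))) ^ 2 := fun i y => by
    rw [← hexponent, ← sq_div_rpow_two_mul (by positivity), mul_one_div]
  simp_rw [hsplit]
  exact exists_measureReal_weighted_sum_ge_le_div_rpow (fun _ _ => sq_nonneg _) hmom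
    (fun i => by positivity) (sum_Icc_mul_rpow_sub_one_le hm.le (by positivity) hs₁) hδ γ

/-- **Lemma 5.4 (abstract form).** Let `β > 0`, `m ≥ 1`, and let `(Y_i)` be nonnegative random
variables with uniformly bounded mixed moments
`E[∏_{j=1}^{k}(Y_{i_j}/(m i_j)^{1/(2+β)})²] ≤ M_k`. Then for any `δ, γ > 0` there is `L > 0`
with `P(Σ_{i=1}^n (Y_i/(m i)^{2/(2+β)})² ≥ n^{β/(2+β)+δ}) ≤ L/n^γ` for all `n ≥ 1`. -/
theorem bad_set_probability (β : ℝ) (hβ : 0 < β) (m : ℕ) (hm : 1 ≤ m)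
    (Ω : Type*) [MeasurableSpace Ω] (P : Measure Ω) [IsProbabilityMeasure P]
    (Y : ℕ → Ω → ℝ) (hmeas : ∀ i, Measurable (Y i)) (hnonneg : ∀ i ω, 0 ≤ Y i ω)
    (hmom : ∀ k : ℕ, 1 ≤ k → ∃ M : ℝ,
      ∀ i : Fin k → ℕ, (∀ j, 1 ≤ i j) →
        Integrable (fun ω => ∏ j, (Y (i j) ω / ((m : ℝ) * (i j : ℝ)) ^ (1 / (2 + β))) ^ 2) P ∧
        ∫ ω, (∏ j, (Y (i j) ω / ((m : ℝ) * (i j : ℝ)) ^ (1 / (2 + β))) ^ 2) ∂P ≤ M) :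
    ∀ δ : ℝ, 0 < δ → ∀ γ : ℝ, 0 < γ → ∃ L : ℝ, 0 < L ∧ ∀ n : ℕ, 1 ≤ n →
      (P {ω | (n : ℝ) ^ (β / (2 + β) + δ) ≤
          ∑ i ∈ Finset.Icc 1 n, (Y i ω / ((m : ℝ) * (i : ℝ)) ^ (2 / (2 + β))) ^ 2}).toReal
        ≤ L / (n : ℝ) ^ γ :=
  fun _ hδ γ _ => bad_set_probability_general hβ (Nat.cast_pos.2 hm) hmom hδ γ
end

section
/- Let β > 0 and let m ≥ 1 be an integer. For every ε > 0 and every γ > 0 there exists an integer n* such that for all n ≥ n*, the random variable D = Σ_{i=1}^{n} binom(d(u_i), 2) of the Móri graph G^n_{m,β} satisfies P(|D − E[D]| ≥ n^{(4+β)/(4+2β)+ε}) ≤ 1/n^{γ}. -/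
open Finset

/-- A parent sequence of length `N`: for each `t ∈ {2,…,N}` an index `f t ∈ {1,…,t-1}`. -/
def ParentSeq (N : ℕ) : Type :=
  ∀ t : Set.Icc 2 N, Set.Icc 1 ((t : ℕ) - 1)

noncomputable instance (N : ℕ) : Fintype (ParentSeq N) := by
  unfold ParentSeq
  classical
  infer_instance

/-- The value of a parent sequence at `j` (junk value `0` outside `{2,…,N}`). -/
def pval {N : ℕ} (f : ParentSeq N) (j : ℕ) : ℕ :=
  if h : 2 ≤ j ∧ j ≤ N then (f ⟨j, Set.mem_Icc.mpr h⟩ : ℕ) else 0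

/-- The degree `d_t(v_i)` of vertex `i` at time `t` in the tree determined by `f`. -/
def deg {N : ℕ} (f : ParentSeq N) (t i : ℕ) : ℕ :=
  ((Finset.Icc 2 t).filter (fun j => pval f j = i)).card + (if 2 ≤ i then 1 else 0)

/-- The Móri probability of the parent sequence `f`. -/
noncomputable def moriP {N : ℕ} (β : ℝ) (f : ParentSeq N) : ℝ :=
  ∏ t ∈ Finset.Icc 2 N, ((deg f (t - 1) (pval f t) : ℝ) + β) / ((2 + β) * ((t : ℝ) - 1) - 2)

/-- Expectation of `X` under the Móri measure on parent sequences of length `N`. -/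
noncomputable def moriE (N : ℕ) (β : ℝ) (X : ParentSeq N → ℝ) : ℝ :=
  ∑ f : ParentSeq N, moriP β f * X f

open Classical in
/-- Probability of an event under the Móri measure on parent sequences of length `N`. -/
noncomputable def moriPr (N : ℕ) (β : ℝ) (p : ParentSeq N → Prop) : ℝ :=
  ∑ f : ParentSeq N, if p f then moriP β f else 0

/-- The index of the merged vertex containing tree vertex `t` when merging in blocks of `m`. -/
def blk (m t : ℕ) : ℕ := (t - 1) / m + 1

/-- The number `m(a,b)` of edges joining `u_a` and `u_b` in the Móri graph `G^n_{m,β}`. -/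
def mult (n m : ℕ) (f : ParentSeq (n * m)) (a b : ℕ) : ℕ :=
  ((Finset.Icc 2 (n * m)).filter (fun t =>
    (blk m t = a ∧ blk m (pval f t) = b) ∨ (blk m t = b ∧ blk m (pval f t) = a))).card

/-- The degree `d(u_i)` of the merged vertex `u_i` in the Móri graph `G^n_{m,β}`
(a loop contributes `2`). -/
def degU (n m : ℕ) (f : ParentSeq (n * m)) (i : ℕ) : ℕ :=
  ((Finset.Icc 2 (n * m)).filter (fun t => blk m t = i)).card +
  ((Finset.Icc 2 (n * m)).filter (fun t => blk m (pval f t) = i)).card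

open Filter Asymptotics

/-!
The weight `d(v) + β` of a merged vertex is the total weight of a block of `m` consecutive tree
vertices, and the block weights have a deterministic sum. Hence, up to an additive constant, `D` is
half the sum of the squared block weights. One step of the tree process multiplies the conditional
expectation of that sum by `1 + 2 / W`, where `W ≈ (2 + β) N` is the total weight, up to a term
linear in the weight of the unfinished block. A correction proportional to that weight, which
vanishes whenever `m ∣ N`, makes the recursion affine.

Given the tree, the next value of the corrected sum varies by at most `4 m` times the largest
weight. A second-order Taylor expansion therefore bounds the growth of its `2k`-th central moment
in terms of the `2k`-th moment of the largest weight, which is at most the sum of the `2k`-th rising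
factorials of all weights. The expectation of the latter obeys an exact recursion and grows at most
like `N ^ (2k / (2 + β))`. Thus the `2k`-th central moment of `D` is at most
`n ^ (k + 2k / (2 + β) + o(k)) = (n ^ ((4 + β) / (4 + 2β) + o(1))) ^ (2k)`, and Markov's inequality
with `k` large gives the theorem.
-/

section Moments

theorem abs_add_pow_sub_taylor_le (n : ℕ) (x y : ℝ) :
    |(x + y) ^ (n + 2) - x ^ (n + 2) - (n + 2) * x ^ (n + 1) * y|
      ≤ ((n : ℝ) + 2) ^ 2 * (y ^ 2 * (|x| + |y|) ^ n) := by
  induction n with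
  | zero =>
    rw [show (x + y) ^ (0 + 2) - x ^ (0 + 2) - ((0 : ℕ) + 2) * x ^ (0 + 1) * y = y ^ 2 by
      push_cast; ring, abs_of_nonneg (sq_nonneg y), pow_zero, mul_one]
    norm_num
    linarith [sq_nonneg y]
  | succ n ih =>
    have expand : (x + y) ^ (n + 1 + 2) - x ^ (n + 1 + 2)
          - ((n + 1 : ℕ) + 2) * x ^ (n + 1 + 1) * y
        = (x + y) * ((x + y) ^ (n + 2) - x ^ (n + 2) - (n + 2) * x ^ (n + 1) * y)
          + (n + 2) * (x ^ (n + 1) * y ^ 2) := by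
      push_cast; ring
    have quadratic : |x ^ (n + 1) * y ^ 2| ≤ y ^ 2 * (|x| + |y|) ^ (n + 1) := by
      rw [abs_mul, abs_pow, abs_of_nonneg (sq_nonneg y), mul_comm]
      gcongr
      linarith [abs_nonneg y]
    calc _ ≤ |x + y| * |(x + y) ^ (n + 2) - x ^ (n + 2) - (n + 2) * x ^ (n + 1) * y|
          + (n + 2) * |x ^ (n + 1) * y ^ 2| := by
            rw [expand]
            refine (abs_add_le _ _).trans ?_
            rw [abs_mul, abs_mul, abs_of_nonneg (by positivity : (0 : ℝ) ≤ n + 2)]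
      _ ≤ (|x| + |y|) * (((n : ℝ) + 2) ^ 2 * (y ^ 2 * (|x| + |y|) ^ n))
          + (n + 2) * (y ^ 2 * (|x| + |y|) ^ (n + 1)) := by
            gcongr
            exact abs_add_le x y
      _ = (((n : ℝ) + 2) ^ 2 + (n + 2)) * (y ^ 2 * (|x| + |y|) ^ (n + 1)) := by ring
      _ ≤ _ := by
            gcongr
            push_cast
            linarith [(Nat.cast_nonneg n : (0 : ℝ) ≤ n)]

theorem sq_mul_abs_add_abs_pow_le (k : ℕ) (x y : ℝ) {δ : ℝ} (hδ : 0 < δ) (hδ1 : δ ≤ 1) :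
    y ^ 2 * (|x| + |y|) ^ (2 * k)
      ≤ 4 ^ k * (δ * x ^ (2 * (k + 1)) + δ⁻¹ ^ k * y ^ (2 * (k + 1))) := by
  have hsq : (|x| + |y|) ^ 2 ≤ 2 * x ^ 2 + 2 * y ^ 2 := by
    nlinarith [sq_nonneg (|x| - |y|), sq_abs x, sq_abs y]
  have hx : 0 ≤ x ^ (2 * (k + 1)) := (even_two_mul _).pow_nonneg x
  have hy : 0 ≤ y ^ (2 * (k + 1)) := (even_two_mul _).pow_nonneg y
  rw [pow_mul]
  rcases le_total (y ^ 2) (δ * x ^ 2) with small | large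
  · have : (|x| + |y|) ^ 2 ≤ 4 * x ^ 2 := by nlinarith [sq_nonneg x]
    calc _ ≤ (δ * x ^ 2) * (4 * x ^ 2) ^ k := by gcongr
      _ = 4 ^ k * (δ * x ^ (2 * (k + 1))) := by rw [mul_pow, ← pow_mul]; ring
      _ ≤ _ := by gcongr; exact le_add_of_nonneg_right (by positivity)
  · have hxy : x ^ 2 ≤ δ⁻¹ * y ^ 2 := by rwa [le_inv_mul_iff₀ hδ]
    have hyy : y ^ 2 ≤ δ⁻¹ * y ^ 2 :=
      le_mul_of_one_le_left (sq_nonneg y) ((one_le_inv₀ hδ).2 hδ1)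
    have : (|x| + |y|) ^ 2 ≤ 4 * (δ⁻¹ * y ^ 2) := by linarith
    calc _ ≤ y ^ 2 * (4 * (δ⁻¹ * y ^ 2)) ^ k := by gcongr
      _ = 4 ^ k * (δ⁻¹ ^ k * y ^ (2 * (k + 1))) := by rw [mul_pow, mul_pow, ← pow_mul]; ring
      _ ≤ _ := by gcongr; exact le_add_of_nonneg_left (by positivity)

theorem add_pow_two_mul_le (k : ℕ) (x y : ℝ) {δ : ℝ} (hδ : 0 < δ) (hδ1 : δ ≤ 1) :
    (x + y) ^ (2 * k) ≤ x ^ (2 * k) + 2 * k * x ^ (2 * k - 1) * y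
      + k ^ 2 * 4 ^ k * (δ * x ^ (2 * k) + δ⁻¹ ^ (k - 1) * y ^ (2 * k)) := by
  cases k with
  | zero => simp
  | succ k =>
    have taylor := le_of_abs_le (abs_add_pow_sub_taylor_le (2 * k) x y)
    have young := mul_le_mul_of_nonneg_left (sq_mul_abs_add_abs_pow_le k x y hδ hδ1)
      (sq_nonneg (((2 * k : ℕ) : ℝ) + 2))
    rw [show 2 * (k + 1) - 1 = 2 * k + 1 by omega, Nat.add_sub_cancel]
    rw [show 2 * k + 2 = 2 * (k + 1) by ring] at taylor
    push_cast at taylor young ⊢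
    linear_combination taylor + young

/-- Expanding around the mean, the linear Taylor term averages out and only a second-order error
remains. -/
theorem sum_mul_pow_two_mul_le {ι : Type*} (s : Finset ι) (q Y : ι → ℝ)
    (hq : ∀ i ∈ s, 0 ≤ q i) (hq1 : ∑ i ∈ s, q i = 1) {R : ℝ}
    (hR : ∀ i ∈ s, ∀ j ∈ s, |Y i - Y j| ≤ R) (k : ℕ) {δ : ℝ} (hδ : 0 < δ) (hδ1 : δ ≤ 1) :
    ∑ i ∈ s, q i * Y i ^ (2 * k) ≤ (1 + k ^ 2 * 4 ^ k * δ) * (∑ i ∈ s, q i * Y i) ^ (2 * k)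
      + k ^ 2 * 4 ^ k * δ⁻¹ ^ (k - 1) * R ^ (2 * k) := by
  set x := ∑ i ∈ s, q i * Y i with hx
  have centered : ∑ i ∈ s, q i * (Y i - x) = 0 := by
    simp only [mul_sub, sum_sub_distrib, ← sum_mul, hq1, one_mul, ← hx, sub_self]
  have deviation : ∀ i ∈ s, |Y i - x| ≤ R := fun i hi =>
    calc |Y i - x| = |∑ j ∈ s, q j * (Y i - Y j)| := by
          simp only [mul_sub, sum_sub_distrib, ← sum_mul, hq1, one_mul, ← hx]
      _ ≤ ∑ j ∈ s, q j * R := (abs_sum_le_sum_abs _ _).trans <| sum_le_sum fun j hj => by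
          rw [abs_mul, abs_of_nonneg (hq j hj)]
          exact mul_le_mul_of_nonneg_left (hR i hi j hj) (hq j hj)
      _ = R := by rw [← sum_mul, hq1, one_mul]
  have pointwise : ∀ i ∈ s, q i * Y i ^ (2 * k) ≤
      q i * (x ^ (2 * k) + k ^ 2 * 4 ^ k * (δ * x ^ (2 * k) + δ⁻¹ ^ (k - 1) * R ^ (2 * k)))
        + 2 * k * x ^ (2 * k - 1) * (q i * (Y i - x)) := fun i hi => by
    have expand := add_pow_two_mul_le k x (Y i - x) hδ hδ1
    have hpow : (Y i - x) ^ (2 * k) ≤ R ^ (2 * k) :=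
      (even_two_mul k).pow_abs (Y i - x) ▸ pow_le_pow_left₀ (abs_nonneg _) (deviation i hi) _
    rw [add_sub_cancel] at expand
    have := mul_le_mul_of_nonneg_left (expand.trans (add_le_add_right (mul_le_mul_of_nonneg_left
      (add_le_add_right (mul_le_mul_of_nonneg_left hpow (by positivity)) _) (by positivity)) _))
      (hq i hi)
    linear_combination this
  calc _ ≤ _ := sum_le_sum pointwise
    _ = _ := by
      rw [sum_add_distrib, ← sum_mul, ← mul_sum, hq1, centered]
      ring

end Moments

section Recursion

theorem eventually_exp_div_add_le_rpow {a a' b : ℝ} (ha : 0 ≤ a) (haa' : a < a') (ha'b : a' < b) :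
    ∀ᶠ N : ℕ in atTop, Real.exp (a / N) + (a' - a) / N ≤ (1 + 1 / (N : ℝ)) ^ b := by
  filter_upwards [eventually_ge_atTop 1, eventually_ge_atTop ⌈a' / (b - a')⌉₊] with N hN hN'
  have hN0 : (0 : ℝ) < N := by exact_mod_cast hN
  have exponent : a' / N ≤ b / (N + 1) := by
    rw [Nat.ceil_le, div_le_iff₀ (sub_pos.2 ha'b)] at hN'
    rw [div_le_div_iff₀ hN0 (by positivity)]
    linarith
  have log_lower : 1 / ((N : ℝ) + 1) ≤ Real.log (1 + 1 / N) := by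
    convert Real.one_sub_inv_le_log_of_pos (show 0 < 1 + 1 / (N : ℝ) by positivity) using 1
    field_simp
    ring
  calc Real.exp (a / N) + (a' - a) / N
      ≤ Real.exp (a / N) * (1 + (a' - a) / N) := by
        have : 1 ≤ Real.exp (a / N) := Real.one_le_exp (by positivity)
        have : 0 ≤ (a' - a) / N := div_nonneg (by linarith) hN0.le
        nlinarith
    _ ≤ Real.exp (a / N) * Real.exp ((a' - a) / N) := by
        gcongr
        linarith [Real.add_one_le_exp ((a' - a) / N)]
    _ = Real.exp (a' / N) := by rw [← Real.exp_add]; congr 1; ring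
    _ ≤ Real.exp (Real.log (1 + 1 / N) * b) := by
        gcongr
        calc a' / N ≤ 1 / ((N : ℝ) + 1) * b := by rwa [one_div_mul_eq_div]
          _ ≤ _ := mul_le_mul_of_nonneg_right log_lower (by linarith)
    _ = (1 + 1 / (N : ℝ)) ^ b := (Real.rpow_def_of_pos (by positivity) b).symm

theorem eventually_exp_div_mul_rpow_add_le {a a' b : ℝ} (ha : 0 ≤ a) (haa' : a < a')
    (ha'b : a' < b) :
    ∀ᶠ N : ℕ in atTop, Real.exp (a / N) * (N : ℝ) ^ b + (a' - a) * (N : ℝ) ^ (b - 1)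
      ≤ ((N + 1 : ℕ) : ℝ) ^ b := by
  filter_upwards [eventually_ge_atTop 1, eventually_exp_div_add_le_rpow ha haa' ha'b]
    with N hN growth
  have hN0 : (0 : ℝ) < N := by exact_mod_cast hN
  calc _ = (N : ℝ) ^ b * (Real.exp (a / N) + (a' - a) / N) := by
        rw [Real.rpow_sub_one hN0.ne']; ring
    _ ≤ (N : ℝ) ^ b * (1 + 1 / (N : ℝ)) ^ b := by gcongr
    _ = ((N + 1 : ℕ) : ℝ) ^ b := by
        rw [← Real.mul_rpow hN0.le (by positivity)]
        congr 1
        push_cast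
        field_simp

theorem le_mul_of_le_mul_add {u v v' w ρ : ℕ → ℝ} {C : ℝ} {N₀ : ℕ} (hC : 0 ≤ C)
    (hρ : ∀ N, 0 ≤ ρ N) (hrec : ∀ N ≥ N₀, u (N + 1) ≤ ρ N * u N + v N)
    (hw : ∀ N ≥ N₀, ρ N * w N + v' N ≤ w (N + 1)) (hv : ∀ N ≥ N₀, v N ≤ C * v' N)
    (h₀ : u N₀ ≤ C * w N₀) : ∀ N ≥ N₀, u N ≤ C * w N := by
  intro N hN
  induction N, hN using Nat.le_induction with
  | base => exact h₀
  | succ N hN ih =>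
    calc u (N + 1) ≤ ρ N * u N + v N := hrec N hN
      _ ≤ ρ N * (C * w N) + C * v' N := by gcongr; exacts [hρ N, hv N hN]
      _ = C * (ρ N * w N + v' N) := by ring
      _ ≤ C * w (N + 1) := by gcongr; exact hw N hN

theorem isBigO_rpow_of_le_exp_mul_add {u v : ℕ → ℝ} {a b : ℝ} (ha : 0 ≤ a) (hab : a < b)
    (hu : ∀ N, 0 ≤ u N) (hv : v =O[atTop] fun N => (N : ℝ) ^ (b - 1))
    (hrec : ∀ᶠ N : ℕ in atTop, u (N + 1) ≤ Real.exp (a / N) * u N + v N) :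
    u =O[atTop] fun N => (N : ℝ) ^ b := by
  obtain ⟨a', haa', ha'b⟩ := exists_between hab
  obtain ⟨B, hB⟩ := hv.bound
  obtain ⟨N₀, hN₀⟩ := eventually_atTop.1 ((eventually_ge_atTop 1).and
    (hB.and (hrec.and (eventually_exp_div_mul_rpow_add_le ha haa' ha'b))))
  have rpow_pos : ∀ N ≥ N₀, 0 < (N : ℝ) ^ b := fun N hN =>
    Real.rpow_pos_of_pos (by exact_mod_cast (hN₀ N hN).1) b
  set C := max (u N₀ / (N₀ : ℝ) ^ b) (B / (a' - a))
  have hC : 0 ≤ C := le_max_of_le_left (div_nonneg (hu N₀) (rpow_pos N₀ le_rfl).le)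
  have hBC : B ≤ C * (a' - a) := (div_le_iff₀ (sub_pos.2 haa')).1 (le_max_right _ _)
  have forcing : ∀ N ≥ N₀, v N ≤ C * ((a' - a) * (N : ℝ) ^ (b - 1)) := fun N hN => by
    refine (Real.le_norm_self _).trans ((hN₀ N hN).2.1.trans ?_)
    rw [Real.norm_of_nonneg (by positivity), ← mul_assoc]
    gcongr
  have bound := le_mul_of_le_mul_add hC (fun N => (Real.exp_pos (a / N)).le)
    (fun N hN => (hN₀ N hN).2.2.1) (fun N hN => (hN₀ N hN).2.2.2) forcing
    ((div_le_iff₀ (rpow_pos N₀ le_rfl)).1 (le_max_left _ _))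
  refine IsBigO.of_bound C ?_
  filter_upwards [eventually_ge_atTop N₀] with N hN
  rw [Real.norm_of_nonneg (hu N), Real.norm_of_nonneg (rpow_pos N hN).le]
  exact bound N hN

theorem eventually_le_rpow_of_isBigO {u : ℕ → ℝ} {a b : ℝ} (hab : a < b)
    (hu : u =O[atTop] fun N => (N : ℝ) ^ a) : ∀ᶠ N : ℕ in atTop, u N ≤ (N : ℝ) ^ b := by
  obtain ⟨C, hC⟩ := hu.bound
  have large : ∀ᶠ N : ℕ in atTop, C ≤ (N : ℝ) ^ (b - a) :=
    ((tendsto_rpow_atTop (sub_pos.2 hab)).comp tendsto_natCast_atTop_atTop).eventually_ge_atTop C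
  filter_upwards [hC, large, eventually_ge_atTop 1] with N hN hCN hN1
  have hN0 : (0 : ℝ) < N := by exact_mod_cast hN1
  calc u N ≤ C * (N : ℝ) ^ a := by
        simpa only [Real.norm_of_nonneg (Real.rpow_nonneg hN0.le a)]
          using (Real.le_norm_self _).trans hN
    _ ≤ (N : ℝ) ^ (b - a) * (N : ℝ) ^ a := by gcongr
    _ = (N : ℝ) ^ b := by rw [← Real.rpow_add hN0, sub_add_cancel]

end Recursion

theorem pow_le_ascPochhammer_eval (k : ℕ) {x : ℝ} (hx : 0 ≤ x) :
    x ^ k ≤ (ascPochhammer ℝ k).eval x := by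
  induction k with
  | zero => simp
  | succ k ih =>
    rw [ascPochhammer_succ_eval, pow_succ]
    have : 0 ≤ x ^ k := pow_nonneg hx k
    exact mul_le_mul ih (by linarith [(Nat.cast_nonneg k : (0 : ℝ) ≤ k)]) hx (this.trans ih)

theorem mul_ascPochhammer_eval_add_one (k : ℕ) (x : ℝ) :
    x * (ascPochhammer ℝ k).eval (x + 1) = (x + k) * (ascPochhammer ℝ k).eval x := by
  have left : (ascPochhammer ℝ (k + 1)).eval x = x * (ascPochhammer ℝ k).eval (x + 1) := by
    rw [ascPochhammer_succ_left]
    simp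
  rw [← left, ascPochhammer_succ_eval, mul_comm]

namespace ParentSeq

variable {N : ℕ} {β : ℝ}

/-- The attachment weight `d_N(v_i) + β` of the vertex `v_i`: the next vertex chooses its parent
with probability proportional to it. -/
noncomputable def weight (β : ℝ) (f : ParentSeq N) (i : ℕ) : ℝ := deg f N i + β

/-- The total attachment weight of a tree with `N` vertices, see `sum_weight`. -/
noncomputable def totalWeight (β : ℝ) (N : ℕ) : ℝ := (2 + β) * N - 2

/-- The extension of a parent sequence of length `N` by the parent `p` of the vertex `N + 1`. -/
def snoc (f : ParentSeq N) (p : Set.Icc 1 N) : ParentSeq (N + 1) :=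
  fun t => if h : (t : ℕ) ≤ N then f ⟨t, t.2.1, h⟩ else ⟨p, p.2.1, p.2.2.trans (by omega)⟩

/-- A nonempty parent sequence is a shorter one together with the parent of the last vertex. -/
def snocEquiv (hN : 1 ≤ N) : ParentSeq N × Set.Icc 1 N ≃ ParentSeq (N + 1) where
  toFun x := x.1.snoc x.2
  invFun g := (fun t => g ⟨t, t.2.1, t.2.2.trans N.le_succ⟩, g ⟨N + 1, by omega, le_rfl⟩)
  left_inv x := by
    refine Prod.ext (funext fun t => ?_) (Subtype.ext ?_)
    · simp [snoc, show (t : ℕ) ≤ N from t.2.2]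
    · simp [snoc]
  right_inv g := by
    funext ⟨t, ht⟩
    by_cases h : t ≤ N
    · simp [snoc, h]
    · obtain rfl : t = N + 1 := le_antisymm ht.2 (by omega)
      exact Subtype.ext (by simp [snoc])

theorem pval_mem_Icc (f : ParentSeq N) {t : ℕ} (ht : t ∈ Icc 2 N) : pval f t ∈ Icc 1 N := by
  have := (f ⟨t, mem_Icc.1 ht⟩).2
  simp only [pval, mem_Icc.1 ht, and_self, dif_pos, mem_Icc, Set.mem_Icc] at this ⊢
  have := mem_Icc.1 ht
  omega

theorem pval_snoc_of_le (f : ParentSeq N) (p : Set.Icc 1 N) {t : ℕ} (ht : t ≤ N) :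
    pval (f.snoc p) t = pval f t := by
  by_cases h : 2 ≤ t
  · simp [pval, snoc, h, ht, ht.trans N.le_succ]
  · simp [pval, h]

theorem pval_snoc_last (f : ParentSeq N) (p : Set.Icc 1 N) : pval (f.snoc p) (N + 1) = p := by
  have : 1 ≤ N := p.2.1.trans p.2.2
  simp [pval, snoc, this]

theorem deg_snoc_of_le (f : ParentSeq N) (p : Set.Icc 1 N) {t : ℕ} (ht : t ≤ N) (i : ℕ) :
    deg (f.snoc p) t i = deg f t i := by
  unfold deg
  congr 2
  exact filter_congr fun j hj => by rw [pval_snoc_of_le f p ((mem_Icc.1 hj).2.trans ht)]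

theorem deg_snoc (f : ParentSeq N) (p : Set.Icc 1 N) (i : ℕ) :
    deg (f.snoc p) (N + 1) i = deg f N i + if (p : ℕ) = i then 1 else 0 := by
  rw [← deg_snoc_of_le f p le_rfl i]
  have : N + 1 ∉ Icc 2 N := by simp
  have : 1 ≤ N := p.2.1.trans p.2.2
  rw [deg, deg, ← insert_Icc_right_eq_Icc_add_one (by omega), filter_insert, pval_snoc_last]
  split_ifs <;> simp_all

theorem weight_snoc (β : ℝ) (f : ParentSeq N) (p : Set.Icc 1 N) (i : ℕ) :
    (f.snoc p).weight β i = f.weight β i + if (p : ℕ) = i then 1 else 0 := by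
  rw [weight, weight, deg_snoc]
  push_cast
  ring

theorem weight_snoc_last (β : ℝ) (f : ParentSeq N) (p : Set.Icc 1 N) :
    (f.snoc p).weight β (N + 1) = 1 + β := by
  have hN : 1 ≤ N := p.2.1.trans p.2.2
  have no_child : ∀ t ∈ Icc 2 N, pval f t ≠ N + 1 := fun t ht h => by
    have := mem_Icc.1 (pval_mem_Icc f ht)
    omega
  rw [weight_snoc, if_neg (p.2.2.trans_lt N.lt_succ_self).ne]
  simp [weight, deg, filter_eq_empty_iff.2 no_child, hN]

theorem weight_nonneg (hβ : 0 ≤ β) (f : ParentSeq N) (i : ℕ) : 0 ≤ f.weight β i := by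
  unfold weight
  positivity

theorem totalWeight_pos (hβ : 0 < β) (hN : 1 ≤ N) : 0 < totalWeight β N := by
  have : (1 : ℝ) ≤ N := by exact_mod_cast hN
  unfold totalWeight
  nlinarith

theorem sum_deg_filter (f : ParentSeq N) (P : ℕ → Prop) [DecidablePred P] :
    ∑ i ∈ Icc 1 N with P i, deg f N i
      = #{t ∈ Icc 2 N | P t} + #{t ∈ Icc 2 N | P (pval f t)} := by
  have parents : ∑ i ∈ Icc 1 N with P i, #{t ∈ Icc 2 N | pval f t = i}
      = #{t ∈ Icc 2 N | P (pval f t)} := by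
    rw [card_eq_sum_card_fiberwise (f := pval f) (t := {i ∈ Icc 1 N | P i})]
    · refine sum_congr rfl fun i hi => ?_
      rw [filter_filter]
      refine congrArg card (filter_congr fun t _ => ?_)
      exact ⟨fun h => ⟨h ▸ (mem_filter.1 hi).2, h⟩, And.right⟩
    · intro t ht
      obtain ⟨ht, hP⟩ := mem_filter.1 ht
      exact mem_filter.2 ⟨pval_mem_Icc f ht, hP⟩
  have children : ∑ i ∈ Icc 1 N with P i, (if 2 ≤ i then 1 else 0) = #{t ∈ Icc 2 N | P t} := by
    rw [← card_filter, filter_filter]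
    congr 1
    ext t
    simp only [mem_filter, mem_Icc]
    grind
  simp only [deg]
  rw [sum_add_distrib, parents, children, add_comm]

theorem sum_weight (β : ℝ) (f : ParentSeq N) (hN : 1 ≤ N) :
    ∑ i ∈ Icc 1 N, f.weight β i = totalWeight β N := by
  have degrees := sum_deg_filter f fun _ => True
  simp only [filter_true, Nat.card_Icc] at degrees
  simp only [weight, sum_add_distrib, sum_const, Nat.card_Icc, nsmul_eq_mul]
  rw [← Nat.cast_sum, degrees, totalWeight, Nat.add_sub_cancel, show N + 1 - 2 = N - 1 by omega]
  push_cast [hN]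
  ring

theorem moriP_snoc (β : ℝ) (f : ParentSeq N) (p : Set.Icc 1 N) :
    moriP β (f.snoc p) = moriP β f * (f.weight β p / totalWeight β N) := by
  have hN : 1 ≤ N := p.2.1.trans p.2.2
  unfold moriP
  rw [prod_Icc_succ_top (by omega)]
  congr 1
  · refine prod_congr rfl fun t ht => ?_
    have ht := mem_Icc.1 ht
    rw [pval_snoc_of_le f p ht.2, deg_snoc_of_le f p (by omega)]
  · rw [pval_snoc_last, Nat.add_sub_cancel, deg_snoc_of_le f p le_rfl, weight, totalWeight]
    push_cast
    ring_nf

/-- The conditional expectation, given the tree `f`, of a quantity `Y` depending on the parent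
of the next vertex. -/
noncomputable def nextMean (β : ℝ) (f : ParentSeq N) (Y : Set.Icc 1 N → ℝ) : ℝ :=
  ∑ p : Set.Icc 1 N, f.weight β p / totalWeight β N * Y p

theorem nextMean_coe (β : ℝ) (f : ParentSeq N) (Y : ℕ → ℝ) :
    f.nextMean β (fun p => Y p) = (∑ i ∈ Icc 1 N, f.weight β i * Y i) / totalWeight β N := by
  rw [nextMean, sum_set_coe (Set.Icc 1 N) (f := fun i => f.weight β i / totalWeight β N * Y i),
    Set.toFinset_Icc, sum_div]
  exact sum_congr rfl fun i _ => div_mul_eq_mul_div _ _ _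

theorem nextMean_add (β : ℝ) (f : ParentSeq N) (Y Z : Set.Icc 1 N → ℝ) :
    f.nextMean β (fun p => Y p + Z p) = f.nextMean β Y + f.nextMean β Z := by
  simp only [nextMean, mul_add, sum_add_distrib]

theorem nextMean_const (hβ : 0 < β) (hN : 1 ≤ N) (f : ParentSeq N) (c : ℝ) :
    f.nextMean β (fun _ => c) = c := by
  rw [nextMean_coe β f fun _ => c, ← sum_mul, sum_weight β f hN,
    mul_div_cancel_left₀ c (totalWeight_pos hβ hN).ne']

theorem nextMean_pow_two_mul_le (hβ : 0 < β) (hN : 1 ≤ N) (f : ParentSeq N)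
    (Y : Set.Icc 1 N → ℝ) {R : ℝ} (hR : ∀ p q, |Y p - Y q| ≤ R) (k : ℕ) {δ : ℝ} (hδ : 0 < δ)
    (hδ1 : δ ≤ 1) :
    f.nextMean β (fun p => Y p ^ (2 * k)) ≤ (1 + k ^ 2 * 4 ^ k * δ) * f.nextMean β Y ^ (2 * k)
      + k ^ 2 * 4 ^ k * δ⁻¹ ^ (k - 1) * R ^ (2 * k) := by
  refine sum_mul_pow_two_mul_le univ _ Y (fun p _ => ?_) ?_ (fun p _ q _ => hR p q) k hδ hδ1
  · exact div_nonneg (weight_nonneg hβ.le f p) (totalWeight_pos hβ hN).le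
  · simpa only [nextMean, mul_one] using nextMean_const hβ hN f 1

end ParentSeq

section Expectation

open ParentSeq

variable {N : ℕ} {β : ℝ}

theorem moriE_succ (hN : 1 ≤ N) (β : ℝ) (X : ParentSeq (N + 1) → ℝ) :
    moriE (N + 1) β X = moriE N β fun f => f.nextMean β fun p => X (f.snoc p) := by
  rw [moriE, ← (snocEquiv hN).sum_comp, Fintype.sum_prod_type]
  refine sum_congr rfl fun f _ => ?_
  simp only [nextMean, mul_sum]
  refine sum_congr rfl fun p _ => ?_
  change moriP β (f.snoc p) * X (f.snoc p) = moriP β f * (_ * X (f.snoc p))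
  rw [moriP_snoc, mul_assoc]

theorem moriE_add (N : ℕ) (β : ℝ) (X Y : ParentSeq N → ℝ) :
    moriE N β (fun f => X f + Y f) = moriE N β X + moriE N β Y := by
  simp only [moriE, mul_add, sum_add_distrib]

theorem moriE_const_mul (N : ℕ) (β c : ℝ) (X : ParentSeq N → ℝ) :
    moriE N β (fun f => c * X f) = c * moriE N β X := by
  simp only [moriE, mul_left_comm _ c, mul_sum]

theorem moriE_const (hβ : 0 < β) (hN : 1 ≤ N) (c : ℝ) : moriE N β (fun _ => c) = c := by
  induction N, hN using Nat.le_induction with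
  | base =>
    have : IsEmpty (Set.Icc 2 1) := by simp
    have : Unique (ParentSeq 1) := Pi.uniqueOfIsEmpty _
    simp [moriE, moriP]
  | succ N hN ih => simpa only [moriE_succ hN, nextMean_const hβ hN] using ih

theorem moriP_nonneg (hβ : 0 < β) (f : ParentSeq N) : 0 ≤ moriP β f := by
  refine prod_nonneg fun t ht => div_nonneg (by positivity) ?_
  have : (2 : ℝ) ≤ t := by exact_mod_cast (mem_Icc.1 ht).1
  nlinarith

theorem moriE_mono (hβ : 0 < β) {X Y : ParentSeq N → ℝ} (h : ∀ f, X f ≤ Y f) :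
    moriE N β X ≤ moriE N β Y :=
  sum_le_sum fun f _ => mul_le_mul_of_nonneg_left (h f) (moriP_nonneg hβ f)

theorem moriE_nonneg (hβ : 0 < β) {X : ParentSeq N → ℝ} (h : ∀ f, 0 ≤ X f) : 0 ≤ moriE N β X :=
  sum_nonneg fun f _ => mul_nonneg (moriP_nonneg hβ f) (h f)

theorem moriPr_le_moriE_pow_div (hβ : 0 < β) (X : ParentSeq N → ℝ) {x : ℝ} (hx : 0 < x) (k : ℕ) :
    moriPr N β (fun f => x ≤ |X f|) ≤ moriE N β (fun f => X f ^ (2 * k)) / x ^ (2 * k) := by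
  rw [moriPr, moriE, sum_div]
  refine sum_le_sum fun f _ => ?_
  have hP := moriP_nonneg hβ f
  split_ifs with large
  · rw [le_div_iff₀ (by positivity), ← (even_two_mul k).pow_abs (X f)]
    gcongr
  · exact div_nonneg (mul_nonneg hP ((even_two_mul k).pow_nonneg _)) (by positivity)

end Expectation

section Blocks

variable {m : ℕ}

theorem blk_mono (m : ℕ) {s t : ℕ} (h : s ≤ t) : blk m s ≤ blk m t :=
  Nat.add_le_add_right (Nat.div_le_div_right (Nat.sub_le_sub_right h 1)) 1

theorem blk_mem_Icc {N M j : ℕ} (hM : blk m N ≤ M) (hj : j ∈ Icc 1 N) : blk m j ∈ Icc 1 M :=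
  mem_Icc.2 ⟨Nat.le_add_left 1 _, (blk_mono m (mem_Icc.1 hj).2).trans hM⟩

theorem blk_eq_add_one_iff (hm : 1 ≤ m) {t a : ℕ} (ht : 1 ≤ t) :
    blk m t = a + 1 ↔ a * m + 1 ≤ t ∧ t ≤ a * m + m := by
  rw [blk, Nat.add_right_cancel_iff, Nat.div_eq_iff hm]
  omega

theorem filter_blk_eq (hm : 1 ≤ m) (N a : ℕ) :
    {j ∈ Icc 1 N | blk m j = a + 1} = Icc (a * m + 1) (min N (a * m + m)) := by
  ext j
  simp only [mem_filter, mem_Icc, le_min_iff]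
  constructor
  · rintro ⟨⟨h1, hN⟩, h⟩
    have := (blk_eq_add_one_iff hm h1).1 h
    exact ⟨this.1, hN, this.2⟩
  · rintro ⟨h1, hN, h⟩
    have hj : 1 ≤ j := by omega
    exact ⟨⟨hj, hN⟩, (blk_eq_add_one_iff hm hj).2 ⟨h1, h⟩⟩

theorem card_filter_blk_le (hm : 1 ≤ m) (N a : ℕ) : #{j ∈ Icc 1 N | blk m j = a} ≤ m := by
  cases a with
  | zero => simp [blk]
  | succ a => rw [filter_blk_eq hm, Nat.card_Icc]; omega

theorem card_filter_blk (hm : 1 ≤ m) {n a : ℕ} (ha : a ∈ Icc 1 n) :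
    #{j ∈ Icc 1 (n * m) | blk m j = a} = m := by
  obtain ⟨a, rfl⟩ : ∃ b, a = b + 1 := Nat.exists_eq_add_of_le' (mem_Icc.1 ha).1
  have : (a + 1) * m ≤ n * m := Nat.mul_le_mul_right m (mem_Icc.1 ha).2
  rw [add_one_mul] at this
  rw [filter_blk_eq hm, Nat.card_Icc, min_eq_right this]
  omega

theorem blk_mul (hm : 1 ≤ m) {n : ℕ} (hn : 1 ≤ n) : blk m (n * m) = n := by
  obtain ⟨n, rfl⟩ : ∃ k, n = k + 1 := Nat.exists_eq_add_of_le' hn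
  rw [blk_eq_add_one_iff hm (by nlinarith), add_one_mul]
  omega

end Blocks

namespace ParentSeq

variable {N : ℕ} {β : ℝ}

/-- The sum over all vertices of the `k`-th rising factorial of the weight. Its one-step
recursion is exact, while that of the power sum of the weights is not. -/
noncomputable def risingMoment (k : ℕ) (β : ℝ) (f : ParentSeq N) : ℝ :=
  ∑ i ∈ Icc 1 N, (ascPochhammer ℝ k).eval (f.weight β i)

theorem ascPochhammer_eval_weight_nonneg (hβ : 0 ≤ β) (k : ℕ) (f : ParentSeq N) (i : ℕ) :
    0 ≤ (ascPochhammer ℝ k).eval (f.weight β i) :=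
  (pow_nonneg (weight_nonneg hβ f i) k).trans (pow_le_ascPochhammer_eval k (weight_nonneg hβ f i))

theorem risingMoment_nonneg (hβ : 0 ≤ β) (k : ℕ) (f : ParentSeq N) : 0 ≤ f.risingMoment k β :=
  sum_nonneg fun i _ => ascPochhammer_eval_weight_nonneg hβ k f i

theorem pow_weight_le_risingMoment (hβ : 0 ≤ β) (k : ℕ) (f : ParentSeq N) {i : ℕ}
    (hi : i ∈ Icc 1 N) : f.weight β i ^ k ≤ f.risingMoment k β :=
  (pow_le_ascPochhammer_eval k (weight_nonneg hβ f i)).trans <|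
    single_le_sum (f := fun i => (ascPochhammer ℝ k).eval (f.weight β i))
      (fun j _ => ascPochhammer_eval_weight_nonneg hβ k f j) hi

theorem risingMoment_snoc (k : ℕ) (β : ℝ) (f : ParentSeq N) (p : Set.Icc 1 N) :
    (f.snoc p).risingMoment k β = f.risingMoment k β + (ascPochhammer ℝ k).eval (1 + β)
      + ((ascPochhammer ℝ k).eval (f.weight β p + 1)
        - (ascPochhammer ℝ k).eval (f.weight β p)) := by
  have increment : ∀ i ∈ Icc 1 N, (ascPochhammer ℝ k).eval ((f.snoc p).weight β i)
      = (ascPochhammer ℝ k).eval (f.weight β i) + if (p : ℕ) = i then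
        (ascPochhammer ℝ k).eval (f.weight β i + 1) - (ascPochhammer ℝ k).eval (f.weight β i)
        else 0 := fun i _ => by
    rw [weight_snoc]
    split_ifs <;> simp
  rw [risingMoment, sum_Icc_succ_top (by omega), weight_snoc_last, sum_congr rfl increment,
    sum_add_distrib, sum_ite_eq, if_pos (mem_Icc.2 p.2), risingMoment]
  ring

theorem nextMean_risingMoment (hβ : 0 < β) (hN : 1 ≤ N) (k : ℕ) (f : ParentSeq N) :
    f.nextMean β (fun p => (f.snoc p).risingMoment k β)
      = (1 + k / totalWeight β N) * f.risingMoment k β + (ascPochhammer ℝ k).eval (1 + β) := by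
  have increments : ∀ i ∈ Icc 1 N, f.weight β i * ((ascPochhammer ℝ k).eval (f.weight β i + 1)
      - (ascPochhammer ℝ k).eval (f.weight β i)) = k * (ascPochhammer ℝ k).eval (f.weight β i) :=
    fun i _ => by rw [mul_sub, mul_ascPochhammer_eval_add_one]; ring
  simp only [risingMoment_snoc]
  rw [nextMean_add, nextMean_const hβ hN, nextMean_coe β f fun i =>
    (ascPochhammer ℝ k).eval (f.weight β i + 1) - (ascPochhammer ℝ k).eval (f.weight β i),
    sum_congr rfl increments, ← mul_sum, ← risingMoment]
  ring

/-- The total weight of the `a`-th block of `m` consecutive vertices. -/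
noncomputable def blockWeight (m : ℕ) (β : ℝ) (f : ParentSeq N) (a : ℕ) : ℝ :=
  ∑ j ∈ Icc 1 N with blk m j = a, f.weight β j

/-- The sum of the squares of the block weights. At `N = n * m` it determines the number of
pairs of adjacent half-edges, see `sum_choose_degU_two`. -/
noncomputable def sumSq (m : ℕ) (β : ℝ) (f : ParentSeq N) : ℝ :=
  ∑ a ∈ Icc 1 (blk m N), f.blockWeight m β a ^ 2

theorem blockWeight_eq_zero (m : ℕ) (β : ℝ) (f : ParentSeq N) {a : ℕ} (ha : blk m N < a) :
    f.blockWeight m β a = 0 := by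
  rw [blockWeight, filter_eq_empty_iff.2, sum_empty]
  exact fun j hj => ((blk_mono m (mem_Icc.1 hj).2).trans_lt ha).ne

theorem blockWeight_nonneg (hβ : 0 ≤ β) (m : ℕ) (f : ParentSeq N) (a : ℕ) :
    0 ≤ f.blockWeight m β a :=
  sum_nonneg fun j _ => weight_nonneg hβ f j

theorem blockWeight_le {m : ℕ} (hm : 1 ≤ m) (f : ParentSeq N) {r : ℝ} (hr : 0 ≤ r)
    (hw : ∀ j ∈ Icc 1 N, f.weight β j ≤ r) (a : ℕ) : f.blockWeight m β a ≤ m * r :=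
  calc f.blockWeight m β a ≤ #{j ∈ Icc 1 N | blk m j = a} • r :=
        sum_le_card_nsmul _ _ r fun j hj => hw j (mem_filter.1 hj).1
    _ ≤ m * r := by
        rw [nsmul_eq_mul]
        gcongr
        exact card_filter_blk_le hm N a

theorem blockWeight_snoc (m : ℕ) (β : ℝ) (f : ParentSeq N) (p : Set.Icc 1 N) (a : ℕ) :
    (f.snoc p).blockWeight m β a = f.blockWeight m β a + (if blk m p = a then 1 else 0)
      + if blk m (N + 1) = a then 1 + β else 0 := by
  simp only [blockWeight, sum_filter]
  rw [sum_Icc_succ_top (by omega), weight_snoc_last]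
  congr 1
  rw [← sum_filter, ← sum_filter]
  simp only [weight_snoc, sum_add_distrib, sum_ite_eq, mem_filter, mem_Icc]
  congr 1
  simp [Set.mem_Icc.1 p.2]

theorem sum_weight_mul_blk (m : ℕ) (β : ℝ) (f : ParentSeq N) {M : ℕ} (hM : blk m N ≤ M)
    (g : ℕ → ℝ) :
    ∑ j ∈ Icc 1 N, f.weight β j * g (blk m j) = ∑ a ∈ Icc 1 M, f.blockWeight m β a * g a := by
  rw [← sum_fiberwise_of_maps_to fun j hj => blk_mem_Icc hM hj]
  refine sum_congr rfl fun a _ => ?_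
  rw [blockWeight, sum_mul]
  exact sum_congr rfl fun j hj => by rw [(mem_filter.1 hj).2]

theorem sumSq_eq_sum (m : ℕ) (β : ℝ) (f : ParentSeq N) {M : ℕ} (hM : blk m N ≤ M) :
    f.sumSq m β = ∑ a ∈ Icc 1 M, f.blockWeight m β a ^ 2 := by
  simp only [sumSq, sq, ← sum_weight_mul_blk m β f le_rfl, ← sum_weight_mul_blk m β f hM]

theorem sumSq_snoc (m : ℕ) (β : ℝ) (f : ParentSeq N) (p : Set.Icc 1 N) :
    (f.snoc p).sumSq m β = f.sumSq m β + (2 * f.blockWeight m β (blk m p) + 1)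
      + (2 * (1 + β) * (f.blockWeight m β (blk m (N + 1))
        + if blk m p = blk m (N + 1) then 1 else 0) + (1 + β) ^ 2) := by
  have hN : blk m N ≤ blk m (N + 1) := blk_mono m N.le_succ
  have expand : ∀ a ∈ Icc 1 (blk m (N + 1)), (f.snoc p).blockWeight m β a ^ 2
      = f.blockWeight m β a ^ 2 + (if blk m p = a then 2 * f.blockWeight m β a + 1 else 0)
        + if blk m (N + 1) = a then 2 * (1 + β) * (f.blockWeight m β a
          + if blk m p = a then 1 else 0) + (1 + β) ^ 2 else 0 := fun a _ => by
    rw [blockWeight_snoc]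
    split_ifs <;> ring
  rw [sumSq, sum_congr rfl expand, sum_add_distrib, sum_add_distrib, sum_ite_eq, sum_ite_eq,
    if_pos (blk_mem_Icc hN (mem_Icc.2 p.2)), if_pos (blk_mem_Icc le_rfl (by simp)),
    sumSq_eq_sum m β f hN]

/-- The coefficient with which the weight of the block under construction must be added to
`sumSq` in order that the next conditional expectation is affine in the resulting quantity.
Here `r` is the number of vertices still missing from that block, and `N` the number of
vertices present. -/
noncomputable def correction (β : ℝ) : ℕ → ℕ → ℝ
  | 0, _ => 0
  | r + 1, N => (2 * (1 + β) + correction β r (N + 1)) *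
      ((1 + 1 / totalWeight β N) / (1 + 2 / totalWeight β N))

theorem correction_nonneg (hβ : 0 < β) (r : ℕ) (hN : 1 ≤ N) : 0 ≤ correction β r N := by
  induction r generalizing N with
  | zero => exact le_rfl
  | succ r ih =>
    have := ih (N := N + 1) (by omega)
    have := totalWeight_pos hβ hN
    rw [correction]
    positivity

theorem correction_le (hβ : 0 < β) (r : ℕ) (hN : 1 ≤ N) : correction β r N ≤ 2 * (1 + β) * r := by
  induction r generalizing N with
  | zero => simp [correction]
  | succ r ih =>
    have hc := correction_nonneg hβ r (N := N + 1) (by omega)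
    have hW := totalWeight_pos hβ hN
    calc correction β (r + 1) N ≤ 2 * (1 + β) + correction β r (N + 1) := by
          refine mul_le_of_le_one_right (by positivity) ((div_le_one (by positivity)).2 ?_)
          gcongr
          norm_num
      _ ≤ 2 * (1 + β) + 2 * (1 + β) * r := by gcongr; exact ih (by omega)
      _ = 2 * (1 + β) * (r + 1 : ℕ) := by push_cast; ring

/-- The value of `correction` after the next step, as long as the current block is kept. -/
noncomputable def nextCorrection (m : ℕ) (β : ℝ) (N : ℕ) : ℝ := correction β (m - N % m - 1) (N + 1)

theorem correction_mul_one_add (hβ : 0 < β) {m : ℕ} (hm : 1 ≤ m) (hN : 1 ≤ N) :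
    correction β (m - N % m) N * (1 + 2 / totalWeight β N)
      = (2 * (1 + β) + nextCorrection m β N) * (1 + 1 / totalWeight β N) := by
  have hW := totalWeight_pos hβ hN
  have := N.mod_lt hm
  rw [nextCorrection, show m - N % m = m - N % m - 1 + 1 by omega, correction, Nat.add_sub_cancel]
  field_simp

theorem nextCorrection_nonneg (hβ : 0 < β) (m N : ℕ) : 0 ≤ nextCorrection m β N :=
  correction_nonneg hβ _ (by omega)

theorem two_mul_add_nextCorrection_le (hβ : 0 < β) {m : ℕ} (hm : 1 ≤ m) (N : ℕ) :
    2 * (1 + β) + nextCorrection m β N ≤ 2 * (1 + β) * m := by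
  have hr : ((m - N % m - 1 : ℕ) : ℝ) ≤ m - 1 := by
    rw [← Nat.cast_pred hm]
    exact_mod_cast Nat.sub_le_sub_right (Nat.sub_le _ _) 1
  have := correction_le hβ (m - N % m - 1) (N := N + 1) (by omega)
  unfold nextCorrection
  nlinarith

/-- The sum of the squared block weights, corrected by a multiple of the weight of the block
which receives the next vertex. -/
noncomputable def potential (m : ℕ) (β : ℝ) (f : ParentSeq N) : ℝ :=
  f.sumSq m β + correction β (m - N % m) N * f.blockWeight m β (blk m (N + 1))

theorem potential_eq_add_nextCorrection_mul {m : ℕ} (hm : 1 ≤ m) (g : ParentSeq (N + 1)) :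
    g.potential m β = g.sumSq m β + nextCorrection m β N * g.blockWeight m β (blk m (N + 1)) := by
  have hmod := N.mod_lt hm
  unfold potential
  by_cases h : m ∣ N + 1
  · have hnext : blk m (N + 1) < blk m (N + 1 + 1) := by
      simp [blk, Nat.succ_div_of_dvd h]
    have : nextCorrection m β N = 0 := by
      have : m ≤ N % m + 1 := by
        refine Nat.le_of_dvd (by omega) ?_
        rwa [Nat.dvd_iff_mod_eq_zero, Nat.mod_add_mod, ← Nat.dvd_iff_mod_eq_zero]
      rw [nextCorrection, show m - N % m - 1 = 0 by omega, correction]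
    rw [blockWeight_eq_zero m β g hnext, this]
    ring
  · have hblk : blk m (N + 1 + 1) = blk m (N + 1) := by
      simp [blk, Nat.succ_div_of_not_dvd h]
    have hmod' : (N + 1) % m = N % m + 1 := by
      have : N % m + 1 ≠ m := fun h' => h <| by
        rw [Nat.dvd_iff_mod_eq_zero, ← Nat.mod_add_mod, h', Nat.mod_self]
      rw [← Nat.mod_add_mod, Nat.mod_eq_of_lt (by omega)]
    rw [hblk, hmod', nextCorrection, Nat.sub_sub]

/-- The part of the increment of `potential` that depends on the block `a` to which the next
vertex attaches. -/
noncomputable def jump (m : ℕ) (β : ℝ) (f : ParentSeq N) (a : ℕ) : ℝ :=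
  2 * f.blockWeight m β a + if a = blk m (N + 1) then 2 * (1 + β) + nextCorrection m β N else 0

/-- The deterministic part of the increment of `potential`. -/
noncomputable def drift (m : ℕ) (β : ℝ) (N : ℕ) : ℝ :=
  1 + (1 + β) ^ 2 + (1 + β) * nextCorrection m β N

theorem potential_snoc {m : ℕ} (hm : 1 ≤ m) (β : ℝ) (f : ParentSeq N) (p : Set.Icc 1 N) :
    (f.snoc p).potential m β = f.sumSq m β
      + (2 * (1 + β) + nextCorrection m β N) * f.blockWeight m β (blk m (N + 1)) + drift m β N
      + f.jump m β (blk m p) := by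
  rw [potential_eq_add_nextCorrection_mul hm, sumSq_snoc, blockWeight_snoc, if_pos rfl, drift, jump]
  split_ifs <;> ring

theorem nextMean_jump (m : ℕ) (β : ℝ) (f : ParentSeq N) :
    f.nextMean β (fun p => f.jump m β (blk m p)) = (2 * f.sumSq m β
      + (2 * (1 + β) + nextCorrection m β N) * f.blockWeight m β (blk m (N + 1)))
        / totalWeight β N := by
  have hN : blk m N ≤ blk m (N + 1) := blk_mono m N.le_succ
  rw [nextMean_coe β f fun p => f.jump m β (blk m p), sum_weight_mul_blk m β f hN,
    sumSq_eq_sum m β f hN]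
  simp only [jump, mul_add, sum_add_distrib, mul_ite, mul_zero]
  rw [sum_ite_eq', if_pos (blk_mem_Icc le_rfl (by simp)), mul_sum]
  congr 2
  · exact sum_congr rfl fun a _ => by ring
  · ring

theorem nextMean_potential (hβ : 0 < β) {m : ℕ} (hm : 1 ≤ m) (hN : 1 ≤ N) (f : ParentSeq N) :
    f.nextMean β (fun p => (f.snoc p).potential m β)
      = (1 + 2 / totalWeight β N) * f.potential m β + drift m β N := by
  simp only [potential_snoc hm]
  rw [nextMean_add, nextMean_const hβ hN, nextMean_jump, potential]
  linear_combination (-f.blockWeight m β (blk m (N + 1))) * correction_mul_one_add hβ hm hN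

theorem jump_nonneg (hβ : 0 < β) (m : ℕ) (f : ParentSeq N) (a : ℕ) : 0 ≤ f.jump m β a := by
  have := blockWeight_nonneg hβ.le m f a
  have := nextCorrection_nonneg hβ m N
  unfold jump
  positivity

theorem exists_jump_le (hβ : 0 < β) {m : ℕ} (hm : 1 ≤ m) (hN : 2 ≤ N) (f : ParentSeq N) :
    ∃ i ∈ Icc 1 N, ∀ a, f.jump m β a ≤ 4 * m * f.weight β i := by
  obtain ⟨i, hi, heaviest⟩ := exists_max_image (Icc 1 N) (f.weight β) ⟨1, by simp; omega⟩
  refine ⟨i, hi, fun a => ?_⟩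
  have heavy : 1 + β ≤ f.weight β i := by
    refine le_trans ?_ (heaviest 2 (mem_Icc.2 ⟨one_le_two, hN⟩))
    simp [weight, deg]
  have block := blockWeight_le hm f (weight_nonneg hβ.le f i) heaviest a
  have extra : (if a = blk m (N + 1) then 2 * (1 + β) + nextCorrection m β N else 0)
      ≤ 2 * m * f.weight β i :=
    calc _ ≤ 2 * (1 + β) + nextCorrection m β N := by
          have := nextCorrection_nonneg hβ m N
          split_ifs
          · exact le_rfl
          · positivity
      _ ≤ 2 * (1 + β) * m := two_mul_add_nextCorrection_le hβ hm N
      _ ≤ 2 * m * f.weight β i := by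
          rw [mul_right_comm]
          gcongr
  unfold jump
  linarith

theorem abs_jump_sub_jump_le {R : ℝ} (hβ : 0 < β) (m : ℕ) (f : ParentSeq N)
    (hR : ∀ a, f.jump m β a ≤ R) (a b : ℕ) : |f.jump m β a - f.jump m β b| ≤ R := by
  have := hR a
  have := hR b
  have := jump_nonneg hβ m f a
  have := jump_nonneg hβ m f b
  exact abs_sub_le_iff.2 ⟨by linarith, by linarith⟩

/-- The deviation of the potential from its mean. -/
noncomputable def centeredPotential (m : ℕ) (β : ℝ) (f : ParentSeq N) : ℝ :=
  f.potential m β - moriE N β (potential m β)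

theorem moriE_potential_succ (hβ : 0 < β) {m : ℕ} (hm : 1 ≤ m) (hN : 1 ≤ N) :
    moriE (N + 1) β (potential m β)
      = (1 + 2 / totalWeight β N) * moriE N β (potential m β) + drift m β N := by
  rw [moriE_succ hN]
  simp only [nextMean_potential hβ hm hN]
  rw [moriE_add, moriE_const_mul, moriE_const hβ hN]

theorem nextMean_centeredPotential (hβ : 0 < β) {m : ℕ} (hm : 1 ≤ m) (hN : 1 ≤ N)
    (f : ParentSeq N) :
    f.nextMean β (fun p => (f.snoc p).centeredPotential m β)
      = (1 + 2 / totalWeight β N) * f.centeredPotential m β := by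
  simp only [centeredPotential, sub_eq_add_neg]
  rw [nextMean_add, nextMean_const hβ hN, nextMean_potential hβ hm hN,
    moriE_potential_succ hβ hm hN]
  ring

theorem nextMean_centeredPotential_pow_le (hβ : 0 < β) {m : ℕ} (hm : 1 ≤ m) (hN : 2 ≤ N)
    (f : ParentSeq N) (k : ℕ) {δ : ℝ} (hδ : 0 < δ) (hδ1 : δ ≤ 1) :
    f.nextMean β (fun p => (f.snoc p).centeredPotential m β ^ (2 * k))
      ≤ (1 + k ^ 2 * 4 ^ k * δ) * (1 + 2 / totalWeight β N) ^ (2 * k)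
          * f.centeredPotential m β ^ (2 * k)
        + k ^ 2 * 4 ^ k * (4 * m) ^ (2 * k) * δ⁻¹ ^ (k - 1) * f.risingMoment (2 * k) β := by
  obtain ⟨i, hi, hjump⟩ := exists_jump_le hβ hm hN f
  have oscillation (p q : Set.Icc 1 N) : |(f.snoc p).centeredPotential m β
      - (f.snoc q).centeredPotential m β| ≤ 4 * m * f.weight β i := by
    convert abs_jump_sub_jump_le hβ m f hjump (blk m p) (blk m q) using 2
    simp only [centeredPotential, potential_snoc hm]
    ring
  have moment := nextMean_pow_two_mul_le hβ (by omega) f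
    (fun p => (f.snoc p).centeredPotential m β) oscillation k hδ hδ1
  rw [nextMean_centeredPotential hβ hm (by omega), mul_pow, ← mul_assoc] at moment
  refine moment.trans (add_le_add_right ?_ _)
  calc _ = k ^ 2 * 4 ^ k * (4 * m) ^ (2 * k) * δ⁻¹ ^ (k - 1) * f.weight β i ^ (2 * k) := by
        rw [mul_pow (4 * (m : ℝ))]; ring
    _ ≤ _ := by gcongr; exact pow_weight_le_risingMoment hβ.le (2 * k) f hi

theorem moriE_centeredPotential_pow_succ_le (hβ : 0 < β) {m : ℕ} (hm : 1 ≤ m) (hN : 2 ≤ N)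
    (k : ℕ) {δ : ℝ} (hδ : 0 < δ) (hδ1 : δ ≤ 1) :
    moriE (N + 1) β (fun f => f.centeredPotential m β ^ (2 * k))
      ≤ (1 + k ^ 2 * 4 ^ k * δ) * (1 + 2 / totalWeight β N) ^ (2 * k)
          * moriE N β (fun f => f.centeredPotential m β ^ (2 * k))
        + k ^ 2 * 4 ^ k * (4 * m) ^ (2 * k) * δ⁻¹ ^ (k - 1)
          * moriE N β (risingMoment (2 * k) β) := by
  rw [moriE_succ (by omega), ← moriE_const_mul, ← moriE_const_mul, ← moriE_add]
  exact moriE_mono hβ fun f => nextMean_centeredPotential_pow_le hβ hm hN f k hδ hδ1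

theorem blockWeight_eq_degU_add {n m : ℕ} (hm : 1 ≤ m) (β : ℝ) (f : ParentSeq (n * m)) {a : ℕ}
    (ha : a ∈ Icc 1 n) : f.blockWeight m β a = degU n m f a + β * m := by
  simp only [blockWeight, weight, sum_add_distrib, sum_const, card_filter_blk hm ha, nsmul_eq_mul]
  rw [← Nat.cast_sum, sum_deg_filter f (blk m · = a), degU, mul_comm β]

theorem sum_choose_degU_two {n m : ℕ} (hm : 1 ≤ m) (hn : 1 ≤ n) (β : ℝ)
    (f : ParentSeq (n * m)) :
    ∑ a ∈ Icc 1 n, ((degU n m f a).choose 2 : ℝ) = 1 / 2 * f.sumSq m β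
      + 1 / 2 * (n * (β * m * (β * m + 1)) - (2 * β * m + 1) * totalWeight β (n * m)) := by
  have pairs : ∀ a ∈ Icc 1 n, ((degU n m f a).choose 2 : ℝ)
      = 1 / 2 * (f.blockWeight m β a ^ 2 - (2 * β * m + 1) * (f.blockWeight m β a * 1)
        + β * m * (β * m + 1)) := fun a ha => by
    rw [Nat.cast_choose_two, blockWeight_eq_degU_add hm β f ha]
    ring
  have hblk := (blk_mul hm hn).le
  have total : ∑ a ∈ Icc 1 n, f.blockWeight m β a * 1 = totalWeight β (n * m) := by
    rw [← sum_weight_mul_blk m β f hblk (fun _ => 1), ← sum_weight β f (Nat.mul_pos hn hm)]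
    simp only [mul_one]
  rw [sum_congr rfl pairs, ← mul_sum, sum_add_distrib, sum_sub_distrib, ← mul_sum, total,
    ← sumSq_eq_sum m β f hblk, sum_const, Nat.card_Icc, nsmul_eq_mul, Nat.add_sub_cancel]
  ring

theorem potential_mul {n m : ℕ} (hm : 1 ≤ m) (hn : 1 ≤ n) (β : ℝ) (f : ParentSeq (n * m)) :
    f.potential m β = f.sumSq m β := by
  have : blk m (n * m) < blk m (n * m + 1) := by
    rw [blk_mul hm hn, blk, Nat.add_sub_cancel, Nat.mul_div_cancel n hm]
    exact n.lt_succ_self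
  rw [potential, blockWeight_eq_zero m β f this, mul_zero, add_zero]

theorem sum_choose_degU_two_sub_moriE (hβ : 0 < β) {n m : ℕ} (hm : 1 ≤ m) (hn : 1 ≤ n)
    (f : ParentSeq (n * m)) :
    ∑ a ∈ Icc 1 n, ((degU n m f a).choose 2 : ℝ)
        - moriE (n * m) β (fun g => ∑ a ∈ Icc 1 n, ((degU n m g a).choose 2 : ℝ))
      = 1 / 2 * f.centeredPotential m β := by
  simp only [sum_choose_degU_two hm hn β, ← potential_mul hm hn]
  rw [moriE_add, moriE_const_mul, moriE_const hβ (Nat.mul_pos hn hm), centeredPotential]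
  ring

end ParentSeq

section Asymptotics

open ParentSeq

variable {β : ℝ}

theorem eventually_div_totalWeight_le (hβ : 0 < β) {c a : ℝ} (h : c / (2 + β) < a) :
    ∀ᶠ N : ℕ in atTop, c / totalWeight β N ≤ a / N := by
  have gap : 0 < a * (2 + β) - c := by rwa [sub_pos, ← div_lt_iff₀ (by positivity)]
  filter_upwards [eventually_ge_atTop 1, eventually_ge_atTop ⌈2 * a / (a * (2 + β) - c)⌉₊]
    with N hN hN'
  have hN0 : (0 : ℝ) < N := by exact_mod_cast hN
  rw [Nat.ceil_le, div_le_iff₀ gap] at hN'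
  rw [div_le_div_iff₀ (totalWeight_pos hβ hN) hN0, totalWeight]
  linarith

theorem isBigO_moriE_risingMoment (hβ : 0 < β) (k : ℕ) {b : ℝ} (hb : 1 ≤ b)
    (hkb : k / (2 + β) < b) :
    (fun N : ℕ => moriE N β (risingMoment k β)) =O[atTop] fun N : ℕ => (N : ℝ) ^ b := by
  obtain ⟨a, hka, hab⟩ := exists_between hkb
  have nonneg (N : ℕ) : 0 ≤ moriE N β (risingMoment k β) :=
    moriE_nonneg hβ (risingMoment_nonneg hβ.le k)
  refine isBigO_rpow_of_le_exp_mul_add (a := a) (v := fun _ => (ascPochhammer ℝ k).eval (1 + β))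
    ((by positivity : 0 ≤ k / (2 + β)).trans hka.le) hab nonneg ?_ ?_
  · refine IsBigO.of_bound |(ascPochhammer ℝ k).eval (1 + β)| ?_
    filter_upwards [eventually_ge_atTop 1] with N hN
    exact le_mul_of_one_le_right (abs_nonneg _) <| (Real.one_le_rpow (by exact_mod_cast hN)
      (sub_nonneg.2 hb)).trans (Real.le_norm_self _)
  · filter_upwards [eventually_ge_atTop 1, eventually_div_totalWeight_le hβ hka] with N hN hW
    rw [moriE_succ hN]
    simp only [nextMean_risingMoment hβ hN]
    rw [moriE_add, moriE_const_mul, moriE_const hβ hN]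
    gcongr
    · exact nonneg N
    · linarith [Real.add_one_le_exp (a / N)]

theorem eventually_one_add_mul_one_add_pow_le_exp (hβ : 0 < β) (c : ℝ) {n : ℕ} {a : ℝ}
    (ha : n * 2 / (2 + β) < a) :
    ∀ᶠ N : ℕ in atTop, (1 + c / N) * (1 + 2 / totalWeight β N) ^ n ≤ Real.exp ((a + c) / N) := by
  filter_upwards [eventually_ge_atTop 1, eventually_div_totalWeight_le hβ ha] with N hN hW
  have := totalWeight_pos hβ hN
  calc (1 + c / N) * (1 + 2 / totalWeight β N) ^ n
      ≤ Real.exp (c / N) * Real.exp (2 / totalWeight β N) ^ n := by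
        gcongr
        · linarith [Real.add_one_le_exp (c / N)]
        · linarith [Real.add_one_le_exp (2 / totalWeight β N)]
    _ = Real.exp (n * 2 / totalWeight β N + c / N) := by
        rw [← Real.exp_nat_mul, ← Real.exp_add, add_comm, mul_div_assoc]
    _ ≤ Real.exp ((a + c) / N) := by
        rw [add_div]
        gcongr

theorem isBigO_inv_div_natCast_pow {δ : ℝ} (hδ : 0 ≤ δ) (k : ℕ) :
    (fun N : ℕ => (δ / N)⁻¹ ^ k) =O[atTop] fun N : ℕ => (N : ℝ) ^ (k : ℝ) := by
  refine IsBigO.of_bound (δ⁻¹ ^ k) (Eventually.of_forall fun N => le_of_eq ?_)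
  rw [Real.rpow_natCast, inv_div, div_eq_inv_mul, mul_pow, norm_mul,
    Real.norm_of_nonneg (by positivity)]

theorem isBigO_moriE_centeredPotential_pow (hβ : 0 < β) {m : ℕ} (hm : 1 ≤ m) {k : ℕ} (hk : 1 ≤ k)
    {b : ℝ} (hb : 1 ≤ b) (hkb : 2 * k / (2 + β) < b) :
    (fun N : ℕ => moriE N β (fun f => f.centeredPotential m β ^ (2 * k)))
      =O[atTop] fun N : ℕ => (N : ℝ) ^ (k + b) := by
  have moment_nonneg (N : ℕ) : 0 ≤ moriE N β (fun f => f.centeredPotential m β ^ (2 * k)) :=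
    moriE_nonneg hβ fun f => (even_two_mul k).pow_nonneg _
  have growth : (2 * k : ℕ) * 2 / (2 + β) < k + b := by
    have : 2 * k / (2 + β) ≤ k := (div_le_iff₀ (by positivity)).2 (by nlinarith)
    calc (2 * k : ℕ) * 2 / (2 + β) = 2 * k / (2 + β) + 2 * k / (2 + β) := by push_cast; ring
      _ < k + b := add_lt_add_of_le_of_lt this hkb
  obtain ⟨a, hka, hab⟩ := exists_between growth
  set K : ℝ := k ^ 2 * 4 ^ k
  obtain ⟨δ, hδ, hKδ⟩ := exists_pos_mul_lt (sub_pos.2 hab) K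
  have forcing : (fun N : ℕ => K * (4 * m) ^ (2 * k) * (δ / N)⁻¹ ^ (k - 1)
      * moriE N β (risingMoment (2 * k) β)) =O[atTop] fun N : ℕ => (N : ℝ) ^ (k + b - 1) := by
    refine (((isBigO_inv_div_natCast_pow hδ.le (k - 1)).const_mul_left _).mul
      (isBigO_moriE_risingMoment hβ (2 * k) hb (by exact_mod_cast hkb))).congr' .rfl ?_
    filter_upwards [eventually_ge_atTop 1] with N hN
    rw [← Real.rpow_add (by exact_mod_cast hN), Nat.cast_pred hk]
    ring_nf
  refine isBigO_rpow_of_le_exp_mul_add (a := a + K * δ) (add_nonneg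
    ((by positivity : 0 ≤ (2 * k : ℕ) * 2 / (2 + β)).trans hka.le) (by positivity))
    (by linarith) moment_nonneg forcing ?_
  filter_upwards [eventually_ge_atTop 2, eventually_ge_atTop ⌈δ⌉₊,
    eventually_one_add_mul_one_add_pow_le_exp hβ (K * δ) hka] with N hN hδN growthN
  have hN0 : (0 : ℝ) < N := by positivity
  refine (moriE_centeredPotential_pow_succ_le hβ hm hN k (div_pos hδ hN0)
    ((div_le_one hN0).2 (Nat.ceil_le.1 hδN))).trans ?_
  rw [← mul_div_assoc]
  gcongr
  exact moment_nonneg N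

theorem isBigO_moriE_sum_choose_degU_two_sub_pow (hβ : 0 < β) {m : ℕ} (hm : 1 ≤ m) {k : ℕ}
    (hk : 1 ≤ k) {b : ℝ} (hb : 1 ≤ b) (hkb : 2 * k / (2 + β) < b) :
    (fun n : ℕ => moriE (n * m) β (fun f => (∑ i ∈ Icc 1 n, ((degU n m f i).choose 2 : ℝ)
        - moriE (n * m) β (fun g => ∑ i ∈ Icc 1 n, ((degU n m g i).choose 2 : ℝ))) ^ (2 * k)))
      =O[atTop] fun n : ℕ => (n : ℝ) ^ (k + b) := by
  have multiples : Tendsto (fun n : ℕ => n * m) atTop atTop := tendsto_id.atTop_mul_const' hm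
  have bound := ((isBigO_moriE_centeredPotential_pow hβ hm hk hb hkb).comp_tendsto
    multiples).const_mul_left ((1 / 2 : ℝ) ^ (2 * k))
  refine (bound.congr' ?_ .rfl).trans ?_
  · filter_upwards [eventually_ge_atTop 1] with n hn
    simp only [sum_choose_degU_two_sub_moriE hβ hm hn, mul_pow, Function.comp_apply]
    rw [moriE_const_mul]
  · refine IsBigO.of_bound ((m : ℝ) ^ (k + b)) (Eventually.of_forall fun n => le_of_eq ?_)
    simp only [Function.comp_apply, Nat.cast_mul]
    rw [Real.mul_rpow n.cast_nonneg m.cast_nonneg, norm_mul, mul_comm,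
      Real.norm_of_nonneg (by positivity : 0 ≤ (m : ℝ) ^ (k + b))]

end Asymptotics

/-- **Theorem 5.5.** For `β > 0`, the number `D = Σ_i binom(d(u_i),2)` of pairs of adjacent
half-edges of `G^n_{m,β}` is concentrated: for any `ε > 0` and `γ > 0` there is `n*` such
that for all `n ≥ n*`, `Pr(|D − E[D]| ≥ n^{(4+β)/(4+2β)+ε}) ≤ 1/n^γ`. -/
theorem concentration_adjacent_pairs (β : ℝ) (hβ : 0 < β) (m : ℕ) (hm : 1 ≤ m) :
    ∀ ε : ℝ, 0 < ε → ∀ γ : ℝ, 0 < γ → ∃ nstar : ℕ, ∀ n : ℕ, nstar ≤ n →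
      moriPr (n * m) β (fun f =>
          (n : ℝ) ^ ((4 + β) / (4 + 2 * β) + ε) ≤
            |(∑ i ∈ Finset.Icc 1 n, (Nat.choose (degU n m f i) 2 : ℝ))
              - moriE (n * m) β
                  (fun g => ∑ i ∈ Finset.Icc 1 n, (Nat.choose (degU n m g i) 2 : ℝ))|)
        ≤ 1 / (n : ℝ) ^ γ := by
  intro ε hε γ hγ
  obtain ⟨k, hk⟩ := exists_nat_gt (max (γ / ε) (2 + β))
  have hkγ : γ < k * ε := (div_lt_iff₀ hε).1 ((le_max_left _ _).trans_lt hk)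
  have hkβ : 2 + β < k := (le_max_right _ _).trans_lt hk
  have hk1 : 1 ≤ k := by exact_mod_cast (by linarith : (1 : ℝ) ≤ k)
  set b := 2 * k / (2 + β) + k * ε with hb
  set s := (4 + β) / (4 + 2 * β) + ε with hs
  have hb1 : 1 ≤ b := by
    have : 1 ≤ 2 * k / (2 + β) := (one_le_div (by positivity)).2 (by linarith)
    linarith
  have exponent : k + b < s * (2 * k : ℕ) - γ := by
    have : s * (2 * k : ℕ) = k + b + k * ε := by rw [hs, hb]; push_cast; field_simp; ring
    linarith
  refine eventually_atTop.1 ?_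
  filter_upwards [eventually_ge_atTop 1, eventually_le_rpow_of_isBigO exponent
    (isBigO_moriE_sum_choose_degU_two_sub_pow hβ hm hk1 hb1 (by linarith))] with n hn moment
  have hn0 : (0 : ℝ) < n := by exact_mod_cast hn
  refine (moriPr_le_moriE_pow_div hβ _ (Real.rpow_pos_of_pos hn0 s) k).trans ?_
  rw [← Real.rpow_mul_natCast hn0.le, div_le_iff₀ (by positivity), one_div_mul_eq_div,
    ← Real.rpow_sub hn0]
  exact moment
end
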